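/- arXiv:2206.12631 — 5 statements merged into one kernel-verified Lean document; each statement's English description precedes it below -/
import Mathlib

section
/- Let G be a group acting 2k-transitively on a set X with |X| ≥ 2k+1, for some positive integer k. Then the induced action of G on the set of subsets of X of cardinality k is primitive. -/
/-!
A `2k`-transitive group moves a pair of `k`-subsets exactly as the full symmetric group does,
because their union has at most `2k` points. Hence every block of the action on `k`-subsets is
already a block for the symmetric group.

Let such a block contain `A ≠ B`, and let `H` be the group of permutations preserving it. As the
union of `A` and `B` is not all of `X`, some transposition moves a point of `B \ A` out of `A ∪ B`.
It fixes `A`, so it lies in `H`; it exchanges a point of `B` with a point outside `B`. Together with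
the stabilizer of `B`, which is contained in `H`, it generates all transpositions. Thus `H` is
transitive on `k`-subsets and the block is everything.
-/

open scoped Pointwise

/-- The induced action of a group element on the `k`-element subsets of `X`. -/
noncomputable def ksubAct {G X : Type*} [Group G] [MulAction G X] (k : ℕ) (σ : G)
    (A : { A : Set X // A.ncard = k }) : { A : Set X // A.ncard = k } :=
  ⟨σ • (A : Set X), by rw [Set.ncard_smul_set]; exact A.2⟩

open MulAction Equiv Set

section Block

variable {G Y : Type*} [Group G] [MulAction G Y]

lemma isBlock_of_forall_smul_mem {B : Set Y}
    (hB : ∀ (g : G), ∀ a ∈ B, g • a ∈ B → ∀ b ∈ B, g • b ∈ B) : IsBlock G B := by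
  refine isBlock_iff_smul_eq_of_mem.2 fun g a ha hga => Subset.antisymm ?_ ?_
  · rintro _ ⟨b, hb, rfl⟩
    exact hB g a ha hga b hb
  · exact fun b hb => mem_smul_set_iff_inv_smul_mem.2 <|
      hB g⁻¹ (g • a) hga (by rwa [inv_smul_smul]) b hb

lemma isBlock_setOf_of_invariant {r : Y → Y → Prop} (hr : Equivalence r)
    (hinv : ∀ (g : G) a b, r a b → r (g • a) (g • b)) (a : Y) : IsBlock G {b | r a b} :=
  isBlock_of_forall_smul_mem fun g _ hb hgb _ hc =>
    hr.trans hgb (hinv g _ _ (hr.trans (hr.symm hb) hc))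

lemma forall_eq_or_forall_of_isPreprimitive [IsPreprimitive G Y] {r : Y → Y → Prop}
    (hr : Equivalence r) (hinv : ∀ (g : G) a b, r a b → r (g • a) (g • b)) :
    (∀ a b, r a b → a = b) ∨ ∀ a b, r a b := by
  by_cases hsub : ∀ a, {b | r a b}.Subsingleton
  · exact .inl fun a b hab => hsub a (hr.refl a) hab
  · obtain ⟨a, ha⟩ := not_forall.1 hsub
    have huniv : {b | r a b} = univ :=
      (isBlock_setOf_of_invariant hr hinv a).subsingleton_or_eq_univ.resolve_left ha
    have hall : ∀ b, r a b := eq_univ_iff_forall.1 huniv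
    exact .inr fun b c => hr.trans (hr.symm (hall b)) (hall c)

end Block

section SwapMem

variable {X : Type*} [DecidableEq X] {H : Subgroup (Perm X)}

lemma swap_mem_of_stabilizer_le {A : Set X} (hA : stabilizer (Perm X) A ≤ H) {a b : X}
    (ha : a ∈ A) (hb : b ∉ A) (hab : swap a b ∈ H) (x y : X) : swap x y ∈ H := by
  have swap_left_mem (z : X) : swap z a ∈ H := by
    by_cases hz : z ∈ A
    · exact hA (swap_mem_stabilizer.2 (iff_of_true hz ha))
    · have hzb : swap z b ∈ H := hA (swap_mem_stabilizer.2 (iff_of_false hz hb))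
      exact SubmonoidClass.swap_mem_trans H hzb (swap_comm a b ▸ hab)
  exact SubmonoidClass.swap_mem_trans H (swap_left_mem x) (swap_comm y a ▸ swap_left_mem y)

lemma swap_smul_finset_of_notMem {A : Finset X} {a b : X} (ha : a ∉ A) (hb : b ∉ A) :
    swap a b • A = A := by
  have : swap a b • (A : Set X) = A := swap_mem_stabilizer.2 (iff_of_false ha hb)
  exact_mod_cast this

lemma exists_mem_smul_finset_eq_of_swap_mem (hH : ∀ x y, swap x y ∈ H) {A B : Finset X}
    (hAB : A.card = B.card) : ∃ σ ∈ H, σ • A = B := by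
  induction A using Finset.induction_on generalizing B with
  | empty => exact ⟨1, H.one_mem, by rw [one_smul, Finset.card_eq_zero.1 hAB.symm]⟩
  | insert a A ha ih =>
    rw [Finset.card_insert_of_notMem ha] at hAB
    obtain ⟨b, B, hb, rfl, hB⟩ := Finset.card_eq_succ.1 hAB.symm
    obtain ⟨σ, hσ, rfl⟩ := ih hB.symm
    have hσa : σ • a ∉ σ • A := fun h => ha (Finset.smul_mem_smul_finset_iff σ |>.1 h)
    refine ⟨swap (σ • a) b * σ, H.mul_mem (hH _ _) hσ, ?_⟩
    rw [mul_smul, Finset.smul_finset_insert, Finset.smul_finset_insert,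
      swap_smul_finset_of_notMem hσa hb, Perm.smul_def (swap _ _), swap_apply_left]

lemma eq_univ_of_forall_swap_mem_stabilizer {k : ℕ} {B : Set (powersetCard X k)}
    (hB : B.Nonempty) (hswap : ∀ x y, swap x y ∈ stabilizer (Perm X) B) : B = univ := by
  obtain ⟨S, hS⟩ := hB
  refine eq_univ_iff_forall.2 fun T => ?_
  obtain ⟨σ, hσ, hST⟩ := exists_mem_smul_finset_eq_of_swap_mem hswap (S.2.trans T.2.symm)
  have hσS : σ • S = T := Subtype.ext hST
  rw [← hσS, ← mem_stabilizer_iff.1 hσ]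
  exact smul_mem_smul_set hS

end SwapMem

lemma exists_smul_eq_perm_apply {G X : Type*} [Group G] [MulAction G X] {n : ℕ}
    [IsMultiplyPretransitive G X n] (hX : (n : ENat) ≤ ENat.card X) (σ : Perm X) {U : Finset X}
    (hU : U.card ≤ n) : ∃ g : G, ∀ x ∈ U, g • x = σ x := by
  have := isMultiplyPretransitive_of_le' (G := G) hU hX
  let points : Fin U.card ↪ X := U.equivFin.symm.toEmbedding.trans (.subtype _)
  obtain ⟨g, hg⟩ := exists_smul_eq G points (points.trans σ.toEmbedding)
  refine ⟨g, fun x hx => ?_⟩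
  simpa [points] using DFunLike.congr_fun hg (U.equivFin ⟨x, hx⟩)

section PowersetCard

variable {X : Type*} [DecidableEq X] {k : ℕ}

lemma card_union_le_two_mul (S T : powersetCard X k) : (S.1 ∪ T.1).card ≤ 2 * k := by
  have := Finset.card_union_le S.1 T.1
  rwa [powersetCard.card_eq, powersetCard.card_eq, ← two_mul] at this

lemma isPreprimitive_perm_powersetCard_of_two_mul_lt (hX : ((2 * k : ℕ) : ENat) < ENat.card X) :
    IsPreprimitive (Perm X) (powersetCard X k) where
  toIsPretransitive := powersetCard.isPretransitive
  isTrivialBlock_of_isBlock {B} hB := by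
    refine or_iff_not_imp_left.2 fun hnontriv => ?_
    obtain ⟨S, hS, T, hT, hST⟩ := not_subsingleton_iff.1 hnontriv
    obtain ⟨a, haT, haS⟩ := (powersetCard.exists_mem_notMem_iff_ne T S).1 hST.symm
    obtain ⟨c, hc⟩ := Finset.exists_not_mem_of_card_lt_enatCard
      ((Nat.cast_le.2 (card_union_le_two_mul S T)).trans_lt hX)
    obtain ⟨hcS, hcT⟩ := Finset.notMem_union.1 hc
    have stabilizer_le {U : powersetCard X k} (hU : U ∈ B) :
        stabilizer (Perm X) (U : Set X) ≤ stabilizer (Perm X) B :=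
      (powersetCard.stabilizer_coe U).ge.trans (hB.stabilizer_le hU)
    have hac : swap a c ∈ stabilizer (Perm X) B :=
      stabilizer_le hS (swap_mem_stabilizer.2 (iff_of_false haS hcS))
    exact eq_univ_of_forall_swap_mem_stabilizer ⟨T, hT⟩
      (swap_mem_of_stabilizer_le (stabilizer_le hT) haT hcT hac)

variable {G : Type*} [Group G] [MulAction G X] [IsMultiplyPretransitive G X (2 * k)]

lemma exists_smul_eq_perm_smul_pair (hX : ((2 * k : ℕ) : ENat) ≤ ENat.card X) (σ : Perm X)
    (S T : powersetCard X k) : ∃ g : G, g • S = σ • S ∧ g • T = σ • T := by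
  obtain ⟨g, hg⟩ := exists_smul_eq_perm_apply (G := G) hX σ (card_union_le_two_mul S T)
  have smul_eq {U : powersetCard X k} (hU : U.1 ⊆ S.1 ∪ T.1) : g • U = σ • U :=
    Subtype.ext (Finset.image_congr fun x hx => hg x (hU hx))
  exact ⟨g, smul_eq Finset.subset_union_left, smul_eq Finset.subset_union_right⟩

lemma isBlock_perm_of_isBlock (hX : ((2 * k : ℕ) : ENat) ≤ ENat.card X)
    {B : Set (powersetCard X k)} (hB : IsBlock G B) : IsBlock (Perm X) B := by
  refine isBlock_of_forall_smul_mem fun σ S hS hσS T hT => ?_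
  obtain ⟨g, hgS, hgT⟩ := exists_smul_eq_perm_smul_pair (G := G) hX σ S T
  have hgB : g • B = B := hB.smul_eq_of_mem hS (hgS ▸ hσS)
  rw [← hgT, ← hgB]
  exact smul_mem_smul_set hT

variable (G) in
lemma isPreprimitive_powersetCard_of_isMultiplyPretransitive
    (hX : ((2 * k : ℕ) : ENat) < ENat.card X) :
    IsPreprimitive G (powersetCard X k) where
  toIsPretransitive := powersetCard.isPretransitive_of_isMultiplyPretransitive G
    (isMultiplyPretransitive_of_le' (Nat.le_mul_of_pos_left k two_pos) hX.le)
  isTrivialBlock_of_isBlock hB :=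
    have := isPreprimitive_perm_powersetCard_of_two_mul_lt hX
    (isBlock_perm_of_isBlock hX.le hB).subsingleton_or_eq_univ

end PowersetCard

section NcardSubsets

variable {X : Type*} {k : ℕ}

/-- A `k`-element finset, viewed as one of the sets of cardinality `k` on which `ksubAct` acts. For
`k = 0` it misses the infinite sets, whose `Set.ncard` is `0` by convention. -/
def powersetCardToNcard (S : powersetCard X k) : { A : Set X // A.ncard = k } :=
  ⟨S, powersetCard.ncard_eq S⟩

lemma powersetCardToNcard_injective : (powersetCardToNcard (X := X) (k := k)).Injective :=
  fun _ _ h => SetLike.coe_injective (congrArg Subtype.val h)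

lemma powersetCardToNcard_surjective (hk : 0 < k) :
    (powersetCardToNcard (X := X) (k := k)).Surjective := by
  rintro ⟨A, rfl⟩
  lift A to Finset X using finite_of_ncard_pos hk
  exact ⟨⟨A, (ncard_coe_finset A).symm⟩, rfl⟩

lemma ksubAct_powersetCardToNcard {G : Type*} [Group G] [MulAction G X] [DecidableEq X] (g : G)
    (S : powersetCard X k) : ksubAct k g (powersetCardToNcard S) = powersetCardToNcard (g • S) :=
  Subtype.ext (Finset.coe_smul_finset g S.1).symm

end NcardSubsets

/-- If a group `G` acts `2k`-transitively on a set `X` with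
`|X| ≥ 2k + 1` (`k` a positive integer), then the induced action of `G` on the set of
`k`-element subsets of `X` is primitive: it is transitive, and every `G`-invariant
equivalence relation on the `k`-element subsets is either the relation of equality
(the partition into singletons) or the universal relation (one single block). -/
theorem primitive_on_k_subsets_of_two_k_transitive {G X : Type*} [Group G]
    [MulAction G X] (k : ℕ) (hk : 0 < k)
    (htrans : ∀ f f' : Fin (2 * k) ↪ X, ∃ σ : G, ∀ i, σ • f i = f' i)
    (hcard : ((2 * k + 1 : ℕ) : Cardinal) ≤ Cardinal.mk X) :
    (∀ A B : { A : Set X // A.ncard = k }, ∃ σ : G, ksubAct k σ A = B) ∧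
    (∀ s : { A : Set X // A.ncard = k } → { A : Set X // A.ncard = k } → Prop,
      Equivalence s → (∀ (σ : G) A B, s A B → s (ksubAct k σ A) (ksubAct k σ B)) →
      (∀ A B, s A B → A = B) ∨ ∀ A B, s A B) := by
  classical
  have : IsMultiplyPretransitive G X (2 * k) :=
    isMultiplyPretransitive_iff.2 fun f f' => (htrans f f').imp fun _ hσ => DFunLike.ext _ _ hσ
  have hX : ((2 * k : ℕ) : ENat) < ENat.card X :=
    Cardinal.natCast_lt_toENat.2 ((Nat.cast_lt.2 (2 * k).lt_succ_self).trans_le hcard)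
  have := isPreprimitive_powersetCard_of_isMultiplyPretransitive G hX
  have hsurj := powersetCardToNcard_surjective (X := X) hk
  refine ⟨hsurj.forall₂.2 fun S T => ?_, fun s hs hinv => ?_⟩
  · obtain ⟨g, rfl⟩ := exists_smul_eq G S T
    exact ⟨g, ksubAct_powersetCardToNcard g S⟩
  · simp only [hsurj.forall₂, powersetCardToNcard_injective.eq_iff]
    refine forall_eq_or_forall_of_isPreprimitive (G := G)
      (r := fun S T => s (powersetCardToNcard S) (powersetCardToNcard T)) (hs.comap _) ?_
    exact fun g S T hST => by simpa only [ksubAct_powersetCardToNcard] using hinv g _ _ hST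
end

section
/- Let D be a nonempty finite subset of Cantor space 𝔠 whose elements all belong to the same tail class. Then the setwise stabilizer Stab_V(D) = {g ∈ V : Dg = D} is a maximal subgroup of Thompson's group V. -/
/-- Addresses: finite words over the alphabet `{0,1}` (`Bool`). -/
abbrev Addr : Type := List Bool

/-- Cantor space: infinite words over the alphabet `{0,1}`. -/
abbrev Cantor : Type := ℕ → Bool

/-- Prepend the finite word `α` to the infinite word `w`. -/
def wcat (α : Addr) (w : Cantor) : Cantor := fun n =>
  if h : n < α.length then α.get ⟨n, h⟩ else w (n - α.length)

/-- The cone of the address `α`: the set of infinite words having `α` as a prefix. -/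
def cone (α : Addr) : Set Cantor := Set.range (wcat α)

/-- `g` is a prefix substitution map: there are partitions of Cantor space into cones
`(A i)𝔠` and `(B i)𝔠` such that `g` maps `(A i) w` to `(B i) w`. -/
def IsPrefixSubst (g : Equiv.Perm Cantor) : Prop :=
  ∃ (n : ℕ) (A B : Fin n → Addr),
    (∀ i j, i ≠ j → Disjoint (cone (A i)) (cone (A j))) ∧
    (⋃ i, cone (A i)) = Set.univ ∧
    (∀ i j, i ≠ j → Disjoint (cone (B i)) (cone (B j))) ∧
    (⋃ i, cone (B i)) = Set.univ ∧
    (∀ i w, g (wcat (A i) w) = wcat (B i) w)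

/-- Thompson's group `V`, as the set of prefix substitution maps inside `Equiv.Perm Cantor`. -/
def VSet : Set (Equiv.Perm Cantor) := { g | IsPrefixSubst g }

/-- `α ^ g = β` : `g` maps the cone of `α` onto the cone of `β` by the prefix
substitution `α ↦ β`. -/
def actsOn (g : Equiv.Perm Cantor) (α β : Addr) : Prop :=
  ∀ w, g (wcat α w) = wcat β w

/-- A subset of `Equiv.Perm Cantor` that is closed under the group operations. -/
def IsSubgroupSet (M : Set (Equiv.Perm Cantor)) : Prop :=
  (1 : Equiv.Perm Cantor) ∈ M ∧ (∀ g ∈ M, ∀ h ∈ M, g * h ∈ M) ∧ ∀ g ∈ M, g⁻¹ ∈ M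

/-- `M` is a maximal subgroup of Thompson's group `V`. -/
def IsMaximalSubgroupOfV (M : Set (Equiv.Perm Cantor)) : Prop :=
  IsSubgroupSet M ∧ M ⊆ VSet ∧ M ≠ VSet ∧
    ∀ H : Set (Equiv.Perm Cantor),
      IsSubgroupSet H → M ⊆ H → H ⊆ VSet → H = M ∨ H = VSet

/-- `u` and `v` lie in the same tail class. -/
def TailEq (u v : Cantor) : Prop :=
  ∃ (α β : Addr) (w : Cantor), u = wcat α w ∧ v = wcat β w

/-- A point of Cantor space is rational if it is eventually periodic. -/
def EventuallyPeriodic (u : Cantor) : Prop :=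
  ∃ k p : ℕ, 0 < p ∧ ∀ n : ℕ, k ≤ n → u (n + p) = u n

/-- The setwise stabilizer in Thompson's group `V` of a subset `D` of Cantor space. -/
def setStab (D : Set Cantor) : Set (Equiv.Perm Cantor) :=
  { g | IsPrefixSubst g ∧ (fun w => g w) '' D = D }

/-!
Let `X` be the tail class containing `D`. If `x, y ∈ X` are distinct and `F` is a finite set
avoiding both, write `x = αw` and `y = βw` with `α` and `β` so long that the cones of `α` and `β`
are disjoint and miss `F`. Exchanging these two cones is an element of `V` that takes `x` to `y` and
fixes `F` pointwise. Hence `V` acts `n`-transitively on the infinite set `X` for every `n`.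

For any group `G` acting in this way, the maximality of `Stab(D)` reduces to the finite symmetric
groups: if `F ⊆ X` is finite and contains `D`, then `Stab(F)` surjects onto `Sym(F)`, and the set
stabilizer of `D` in `Sym(F)` is a maximal subgroup as soon as `2|D| < |F|`. Given `h ∈ H ∖ Stab(D)`
in a subgroup `H ≥ Stab(D)`, and any `g ∈ G`, choose such an `F` containing `D`, `hD` and `gD`. Some
`p ∈ Stab(F)` satisfies `pD = hD`, so that `p ∈ H ∖ Stab(D)` and therefore `Stab(F) ≤ H`; some
`q ∈ Stab(F)` satisfies `qD = gD`, so that `g ∈ qStab(D) ⊆ H`.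
-/

open Filter MulAction Set
open scoped Pointwise

/-! ### Highly transitive actions -/

section HighTransitivity

variable {G α : Type*} [Group G] [MulAction G α]

lemma stabilizer_image_of_injective {β : Type*} [MulAction G β] (f : α →[G] β)
    (hf : Function.Injective f) (s : Set α) : stabilizer G (f '' s) = stabilizer G s := by
  ext g
  rw [mem_stabilizer_iff, mem_stabilizer_iff, ← image_smul_set, hf.image_injective.eq_iff]

lemma isMultiplyPretransitive_of_forall_exists_smul_eq
    (h : ∀ F : Set α, F.Finite → ∀ x ∉ F, ∀ y ∉ F, ∃ g : G, g • x = y ∧ ∀ f ∈ F, g • f = f)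
    (n : ℕ) : IsMultiplyPretransitive G α n := by
  induction n with
  | zero => infer_instance
  | succ n ih =>
    refine isMultiplyPretransitive_iff.2 fun x y ↦ ?_
    obtain ⟨g, hg⟩ := isMultiplyPretransitive_iff.1 ih
      ((Fin.succEmb n).trans x) ((Fin.succEmb n).trans y)
    have hg_succ (i : Fin n) : g • x i.succ = y i.succ := DFunLike.congr_fun hg i
    obtain ⟨t, ht_zero, ht_fix⟩ := h (range fun i : Fin n ↦ y i.succ) (finite_range _)
      (g • x 0) (by rintro ⟨i, hi⟩; simp [← hg_succ] at hi) (y 0) (by simp)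
    refine ⟨t * g, DFunLike.ext _ _ <| Fin.cases ?_ fun i ↦ ?_⟩
    · simp [mul_smul, ht_zero]
    · simp [mul_smul, hg_succ, ht_fix]

lemma toPermHom_stabilizer_surjective {F : Set α} (hF : F.Finite)
    [IsMultiplyPretransitive G α F.ncard] :
    Function.Surjective (toPermHom (stabilizer G F) F) := by
  intro σ
  have := hF.to_subtype
  let e : F ≃ Fin F.ncard := Finite.equivFin F
  obtain ⟨g, hg⟩ := exists_smul_eq G (e.symm.toEmbedding.trans (.subtype _))
    ((e.symm.trans σ).toEmbedding.trans (.subtype _))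
  have hgσ (x : F) : g • (x : α) = σ x := by simpa using DFunLike.congr_fun hg (e x)
  have hgF : g ∈ stabilizer G F :=
    (mem_stabilizer_set' hF).2 fun x hx ↦ hgσ ⟨x, hx⟩ ▸ (σ ⟨x, hx⟩).2
  exact ⟨⟨g, hgF⟩, Equiv.ext fun x ↦ Subtype.ext (hgσ x)⟩

lemma exists_mem_stabilizer_smul_eq_of_ncard_eq {F s t : Set α} (hF : F.Finite)
    [IsMultiplyPretransitive G α F.ncard] (hs : s ⊆ F) (ht : t ⊆ F) (hst : s.ncard = t.ncard) :
    ∃ p ∈ stabilizer G F, p • s = t := by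
  have := (hF.subset hs).to_subtype
  have := (hF.subset ht).to_subtype
  obtain ⟨e⟩ : Nonempty (s ≃ t) := Finite.card_eq.1 hst
  obtain ⟨σ, hσ⟩ := Equiv.Perm.exists_extending_pair (inclusion hs) (inclusion ht ∘ e)
    (inclusion_injective hs) ((inclusion_injective ht).comp e.injective)
  obtain ⟨p, rfl⟩ := toPermHom_stabilizer_surjective (G := G) hF σ
  refine ⟨p, p.2, eq_of_subset_of_ncard_le ?_ (by simp [hst]) (hF.subset ht)⟩
  refine smul_set_subset_iff.2 fun x hx ↦ ?_
  have hpx : (p : G) • x = e ⟨x, hx⟩ := congr_arg Subtype.val (hσ ⟨x, hx⟩)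
  exact hpx ▸ (e ⟨x, hx⟩).2

lemma isCoatom_stabilizer_subgroupOf_stabilizer {F s : Set α} (hF : F.Finite)
    [IsMultiplyPretransitive G α F.ncard] (hsF : s ⊆ F) (hs : s.Nonempty)
    (hcard : 2 * s.ncard < F.ncard) :
    IsCoatom ((stabilizer G s).subgroupOf (stabilizer G F)) := by
  have := hF.to_subtype
  let sF : Set F := Subtype.val ⁻¹' s
  have hsF_ncard : sF.ncard = s.ncard :=
    ncard_preimage_of_injective_subset_range Subtype.val_injective (by simpa)
  have hcompl : sF.ncard < sFᶜ.ncard := by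
    have hadd := ncard_add_ncard_compl sF
    rw [Nat.card_coe_set_eq] at hadd
    omega
  have hcoatom := Equiv.Perm.isCoatom_stabilizer_of_ncard_lt_ncard_compl
    (hs.preimage' (by simpa)) hcompl
  convert Subgroup.isCoatom_comap_of_surjective (toPermHom_stabilizer_surjective (G := G) hF)
    hcoatom using 1
  ext p
  rw [Subgroup.mem_subgroupOf, Subgroup.mem_comap, mem_stabilizer_set' (hF.subset hsF),
    mem_stabilizer_set' sF.toFinite]
  exact ⟨fun hp x hx ↦ hp hx, fun hp x hx ↦ hp (b := ⟨x, hsF hx⟩) hx⟩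

lemma exists_superset_isCoatom_stabilizer_subgroupOf_stabilizer [Infinite α]
    (hG : ∀ n, IsMultiplyPretransitive G α n) {s u : Set α} (hs : s.Nonempty) (hu : u.Finite)
    (hsu : s ⊆ u) :
    ∃ F, u ⊆ F ∧ F.Finite ∧ IsCoatom ((stabilizer G s).subgroupOf (stabilizer G F)) := by
  obtain ⟨F, huF, -, hcard⟩ := infinite_univ.exists_superset_ncard_eq (subset_univ u) hu
    (k := u.ncard + (2 * s.ncard + 1)) (by omega)
  have hF : F.Finite := finite_of_ncard_pos (by omega)
  exact ⟨F, huF, hF, isCoatom_stabilizer_subgroupOf_stabilizer hF (hsu.trans huF) hs (by omega)⟩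

theorem isCoatom_stabilizer_of_forall_isMultiplyPretransitive [Infinite α]
    (hG : ∀ n, IsMultiplyPretransitive G α n) {s : Set α} (hs : s.Nonempty) (hfin : s.Finite) :
    IsCoatom (stabilizer G s) := by
  refine ⟨fun htop ↦ ?_, fun H hH ↦ eq_top_iff.2 fun g _ ↦ ?_⟩
  · obtain ⟨F, -, -, hcoatom⟩ :=
      exists_superset_isCoatom_stabilizer_subgroupOf_stabilizer hG hs hfin subset_rfl
    exact hcoatom.1 (by rw [htop, Subgroup.top_subgroupOf])
  · have mem_of_smul_eq {p k : G} (hk : k ∈ H) (hpk : p • s = k • s) : p ∈ H := by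
      have : k⁻¹ * p ∈ stabilizer G s := by simp [mem_stabilizer_iff, mul_smul, hpk]
      simpa using H.mul_mem hk (hH.le this)
    obtain ⟨h, hhH, hhs⟩ := SetLike.exists_of_lt hH
    obtain ⟨F, huF, hF, hcoatom⟩ := exists_superset_isCoatom_stabilizer_subgroupOf_stabilizer hG
      hs (u := s ∪ (h • s ∪ g • s)) (hfin.union (hfin.smul_set.union hfin.smul_set))
      subset_union_left
    obtain ⟨hsF, hhF, hgF⟩ : s ⊆ F ∧ h • s ⊆ F ∧ g • s ⊆ F := by simpa using huF
    obtain ⟨p, hpF, hps⟩ := exists_mem_stabilizer_smul_eq_of_ncard_eq (G := G) hF hsF hhF (by simp)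
    obtain ⟨q, hqF, hqs⟩ := exists_mem_stabilizer_smul_eq_of_ncard_eq (G := G) hF hsF hgF (by simp)
    have hlt : (stabilizer G s).subgroupOf (stabilizer G F) < H.subgroupOf (stabilizer G F) :=
      SetLike.lt_iff_le_and_exists.2 ⟨fun k hk ↦ hH.le hk, ⟨p, hpF⟩, mem_of_smul_eq hhH hps,
        fun hp ↦ hhs (hps.symm.trans hp)⟩
    have hFH : stabilizer G F ≤ H := Subgroup.subgroupOf_eq_top.1 (hcoatom.2 _ hlt)
    exact mem_of_smul_eq (hFH hqF) hqs.symm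

end HighTransitivity

/-! ### Cantor space -/

/-- The finite word formed by the first `n` letters of the infinite word `x`. -/
def initialWord (x : Cantor) (n : ℕ) : Addr := (List.range n).map x

/-- The infinite word left after deleting the first `n` letters of `x`, that is, the `n`-th iterate
of the shift map. -/
def shift (n : ℕ) (x : Cantor) : Cantor := fun k ↦ x (n + k)

@[simp]
lemma length_initialWord (x : Cantor) (n : ℕ) : (initialWord x n).length = n := by
  simp [initialWord]

lemma initialWord_prefix_initialWord (x : Cantor) {m n : ℕ} (h : m ≤ n) :
    initialWord x m <+: initialWord x n := by
  rw [List.prefix_iff_eq_take, length_initialWord]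
  simp [initialWord, ← List.map_take, h]

lemma shift_shift (m n : ℕ) (x : Cantor) : shift m (shift n x) = shift (n + m) x := by
  funext k
  simp [shift, add_assoc]

@[simp]
lemma wcat_initialWord_shift (x : Cantor) (n : ℕ) : wcat (initialWord x n) (shift n x) = x := by
  funext k
  by_cases hk : k < n
  · simp [wcat, initialWord, hk]
  · simp [wcat, shift, hk, Nat.add_sub_cancel' (not_lt.1 hk)]

@[simp]
lemma shift_length_wcat (α : Addr) (w : Cantor) : shift α.length (wcat α w) = w := by
  funext k
  simp [shift, wcat]

@[simp]
lemma initialWord_wcat_length (α : Addr) (w : Cantor) : initialWord (wcat α w) α.length = α := by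
  refine List.ext_getElem (by simp) fun k _ hk ↦ ?_
  simp [initialWord, wcat, hk]

lemma wcat_append (α β : Addr) (w : Cantor) : wcat (α ++ β) w = wcat α (wcat β w) := by
  funext k
  rcases lt_or_ge k α.length with hα | hα
  · simp [wcat, hα, Nat.lt_add_right β.length hα]
  · simp [wcat, hα.not_gt, List.getElem_append_right hα, Nat.sub_lt_iff_lt_add' hα, Nat.sub_sub]

lemma wcat_mem_cone (α : Addr) (w : Cantor) : wcat α w ∈ cone α := mem_range_self w

lemma mem_cone_initialWord (x : Cantor) (n : ℕ) : x ∈ cone (initialWord x n) :=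
  ⟨shift n x, wcat_initialWord_shift x n⟩

lemma mem_cone_iff_initialWord_eq {x : Cantor} {α : Addr} :
    x ∈ cone α ↔ initialWord x α.length = α := by
  constructor
  · rintro ⟨w, rfl⟩
    exact initialWord_wcat_length α w
  · intro h
    exact h ▸ mem_cone_initialWord x _

lemma prefix_of_mem_cone {x : Cantor} {α β : Addr} (hα : x ∈ cone α) (hβ : x ∈ cone β)
    (hlen : α.length ≤ β.length) : α <+: β := by
  rw [← mem_cone_iff_initialWord_eq.1 hα, ← mem_cone_iff_initialWord_eq.1 hβ]
  exact initialWord_prefix_initialWord x hlen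

lemma cone_subset_cone_of_prefix {α β : Addr} (h : α <+: β) : cone β ⊆ cone α := by
  obtain ⟨γ, rfl⟩ := h
  rintro _ ⟨w, rfl⟩
  exact ⟨wcat γ w, (wcat_append α γ w).symm⟩

lemma disjoint_cone_of_notMem {x y : Cantor} {α β : Addr} (hx : x ∈ cone α) (hy : y ∈ cone β)
    (hxβ : x ∉ cone β) (hyα : y ∉ cone α) : Disjoint (cone α) (cone β) := by
  refine disjoint_left.2 fun u huα huβ ↦ ?_
  rcases le_total α.length β.length with hlen | hlen
  · exact hyα (cone_subset_cone_of_prefix (prefix_of_mem_cone huα huβ hlen) hy)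
  · exact hxβ (cone_subset_cone_of_prefix (prefix_of_mem_cone huβ huα hlen) hx)

lemma eventually_notMem_cone_initialWord {u x : Cantor} (h : u ≠ x) :
    ∀ᶠ n in atTop, u ∉ cone (initialWord x n) := by
  obtain ⟨i, hi⟩ := Function.ne_iff.1 h
  filter_upwards [eventually_gt_atTop i] with n hn hu
  rw [mem_cone_iff_initialWord_eq, length_initialWord] at hu
  exact hi (List.map_inj_left.1 hu i (List.mem_range.2 hn))

/-! ### Thompson's group `V` -/

lemma actsOn.append {g : Equiv.Perm Cantor} {α β : Addr} (h : actsOn g α β) (γ : Addr) :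
    actsOn g (α ++ γ) (β ++ γ) := fun w ↦ by
  rw [wcat_append, wcat_append, h]

lemma actsOn.image_cone {g : Equiv.Perm Cantor} {α β : Addr} (h : actsOn g α β) :
    g '' cone α = cone β := by
  rw [cone, ← range_comp]
  exact congr_arg range (funext h)

lemma isPrefixSubst_of_partition {ι : Type*} [Finite ι] {g : Equiv.Perm Cantor} (A B : ι → Addr)
    (hdisj : Pairwise fun i j ↦ Disjoint (cone (A i)) (cone (A j)))
    (hcover : ⋃ i, cone (A i) = univ) (hg : ∀ i, actsOn g (A i) (B i)) : IsPrefixSubst g := by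
  have e := (Finite.equivFin ι).symm
  refine ⟨_, A ∘ e, B ∘ e, fun i j hij ↦ hdisj (e.injective.ne hij), ?_, fun i j hij ↦ ?_, ?_,
    fun i ↦ hg (e i)⟩
  · rw [← hcover]
    exact e.surjective.iUnion_comp fun i ↦ cone (A i)
  · simp only [Function.comp_apply, ← (hg _).image_cone]
    exact (disjoint_image_iff g.injective).2 (hdisj (e.injective.ne hij))
  · simp only [Function.comp_apply, ← (hg _).image_cone, ← image_iUnion]
    rw [e.surjective.iUnion_comp fun i ↦ cone (A i), hcover, image_univ, g.range_eq_univ]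

lemma isPrefixSubst_iff_exists_forall_actsOn {g : Equiv.Perm Cantor} :
    IsPrefixSubst g ↔ ∃ N, ∀ α : Addr, N ≤ α.length → ∃ β, actsOn g α β := by
  constructor
  · rintro ⟨n, A, B, -, hcover, -, -, hg⟩
    refine ⟨Finset.univ.sup fun i ↦ (A i).length, fun α hα ↦ ?_⟩
    obtain ⟨i, hi⟩ := mem_iUnion.1 (hcover ▸ mem_univ (wcat α fun _ ↦ false))
    have hlen : (A i).length ≤ α.length :=
      (Finset.le_sup (f := fun i ↦ (A i).length) (Finset.mem_univ i)).trans hα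
    obtain ⟨γ, rfl⟩ := prefix_of_mem_cone hi (wcat_mem_cone α _) hlen
    exact ⟨B i ++ γ, actsOn.append (hg i) γ⟩
  · rintro ⟨N, hN⟩
    have : Finite {α : Addr // α.length = N} := List.finite_length_eq Bool N
    choose B hB using fun α : {α : Addr // α.length = N} ↦ hN α α.2.ge
    refine isPrefixSubst_of_partition Subtype.val B (fun α β hne ↦ disjoint_left.2 fun x hα hβ ↦ ?_)
      (eq_univ_of_forall fun x ↦ mem_iUnion.2 ⟨⟨_, length_initialWord x N⟩, ?_⟩) hB
    · have hlen := α.2.trans β.2.symm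
      exact hne (Subtype.ext ((prefix_of_mem_cone hα hβ hlen.le).eq_of_length hlen))
    · exact mem_cone_initialWord x N

lemma isPrefixSubst_one : IsPrefixSubst 1 :=
  isPrefixSubst_iff_exists_forall_actsOn.2 ⟨0, fun α _ ↦ ⟨α, fun _ ↦ rfl⟩⟩

lemma IsPrefixSubst.mul {g h : Equiv.Perm Cantor} (hg : IsPrefixSubst g) (hh : IsPrefixSubst h) :
    IsPrefixSubst (g * h) := by
  obtain ⟨N, hN⟩ := isPrefixSubst_iff_exists_forall_actsOn.1 hg
  obtain ⟨M, hM⟩ := isPrefixSubst_iff_exists_forall_actsOn.1 hh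
  refine isPrefixSubst_iff_exists_forall_actsOn.2 ⟨M + N, fun α hα ↦ ?_⟩
  -- `h` rewrites the first `M` letters and leaves the other letters, at least `N` of them, to `g`.
  obtain ⟨β, hβ⟩ := hM (α.take M) (by rw [List.length_take]; omega)
  obtain ⟨γ, hγ⟩ := hN (β ++ α.drop M) (by rw [List.length_append, List.length_drop]; omega)
  have hα_acts : actsOn h α (β ++ α.drop M) := by simpa using hβ.append (α.drop M)
  exact ⟨γ, fun w ↦ by rw [Equiv.Perm.mul_apply, hα_acts, hγ]⟩

lemma IsPrefixSubst.inv {g : Equiv.Perm Cantor} (hg : IsPrefixSubst g) : IsPrefixSubst g⁻¹ := by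
  obtain ⟨n, A, B, hA, hA', hB, hB', hg⟩ := hg
  exact ⟨n, B, A, hB, hB', hA, hA', fun i w ↦ Equiv.Perm.inv_eq_iff_eq.2 (hg i w).symm⟩

/-- Thompson's group `V`, as a subgroup of the permutations of Cantor space with carrier `VSet`. -/
def thompsonV : Subgroup (Equiv.Perm Cantor) where
  carrier := VSet
  one_mem' := isPrefixSubst_one
  mul_mem' := IsPrefixSubst.mul
  inv_mem' := IsPrefixSubst.inv

open Classical in
/-- The map that exchanges the cones of `α` and `β` by the prefix substitutions `α ↦ β` and
`β ↦ α`. It is meaningful only when the two cones are disjoint. -/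
noncomputable def coneSwap (α β : Addr) (x : Cantor) : Cantor :=
  if x ∈ cone α then wcat β (shift α.length x)
  else if x ∈ cone β then wcat α (shift β.length x) else x

lemma coneSwap_wcat_left (α β : Addr) (w : Cantor) : coneSwap α β (wcat α w) = wcat β w := by
  simp [coneSwap, wcat_mem_cone]

lemma coneSwap_wcat_right {α β : Addr} (h : Disjoint (cone α) (cone β)) (w : Cantor) :
    coneSwap α β (wcat β w) = wcat α w := by
  simp [coneSwap, wcat_mem_cone, disjoint_right.1 h (wcat_mem_cone β w)]

lemma coneSwap_of_notMem {α β : Addr} {x : Cantor} (hα : x ∉ cone α) (hβ : x ∉ cone β) :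
    coneSwap α β x = x := by
  simp [coneSwap, hα, hβ]

lemma involutive_coneSwap {α β : Addr} (h : Disjoint (cone α) (cone β)) :
    Function.Involutive (coneSwap α β) := by
  intro x
  by_cases hα : x ∈ cone α
  · obtain ⟨w, rfl⟩ := hα
    rw [coneSwap_wcat_left, coneSwap_wcat_right h]
  by_cases hβ : x ∈ cone β
  · obtain ⟨w, rfl⟩ := hβ
    rw [coneSwap_wcat_right h, coneSwap_wcat_left]
  · rw [coneSwap_of_notMem hα hβ, coneSwap_of_notMem hα hβ]

lemma isPrefixSubst_coneSwap {α β : Addr} (h : Disjoint (cone α) (cone β)) :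
    IsPrefixSubst (involutive_coneSwap h).toPerm := by
  have hleft : actsOn (involutive_coneSwap h).toPerm α β := coneSwap_wcat_left α β
  have hright : actsOn (involutive_coneSwap h).toPerm β α := coneSwap_wcat_right h
  refine isPrefixSubst_iff_exists_forall_actsOn.2 ⟨max α.length β.length, fun δ hδ ↦ ?_⟩
  obtain ⟨hαδ, hβδ⟩ := max_le_iff.1 hδ
  by_cases hα : α <+: δ
  · obtain ⟨γ, rfl⟩ := hα
    exact ⟨β ++ γ, hleft.append γ⟩
  by_cases hβ : β <+: δ
  · obtain ⟨γ, rfl⟩ := hβ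
    exact ⟨α ++ γ, hright.append γ⟩
  · exact ⟨δ, fun w ↦ coneSwap_of_notMem
      (fun hw ↦ hα (prefix_of_mem_cone hw (wcat_mem_cone δ w) hαδ))
      (fun hw ↦ hβ (prefix_of_mem_cone hw (wcat_mem_cone δ w) hβδ))⟩

/-! ### Tail classes -/

lemma tailEq_iff_exists_shift_eq {u v : Cantor} :
    TailEq u v ↔ ∃ m n, shift m u = shift n v := by
  constructor
  · rintro ⟨α, β, w, rfl, rfl⟩
    exact ⟨α.length, β.length, by simp⟩
  · rintro ⟨m, n, h⟩
    exact ⟨initialWord u m, initialWord v n, shift m u, by simp, by simp [h]⟩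

lemma TailEq.symm {u v : Cantor} : TailEq u v → TailEq v u
  | ⟨α, β, w, hu, hv⟩ => ⟨β, α, w, hv, hu⟩

lemma TailEq.trans {u v w : Cantor} (huv : TailEq u v) (hvw : TailEq v w) : TailEq u w := by
  obtain ⟨m, n, huv⟩ := tailEq_iff_exists_shift_eq.1 huv
  obtain ⟨m', n', hvw⟩ := tailEq_iff_exists_shift_eq.1 hvw
  refine tailEq_iff_exists_shift_eq.2 ⟨m + m', n' + n, ?_⟩
  rw [← shift_shift, huv, ← shift_shift, ← hvw, shift_shift, shift_shift, add_comm]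

lemma IsPrefixSubst.tailEq_apply {g : Equiv.Perm Cantor} (hg : IsPrefixSubst g) (x : Cantor) :
    TailEq (g x) x := by
  obtain ⟨N, hN⟩ := isPrefixSubst_iff_exists_forall_actsOn.1 hg
  obtain ⟨β, hβ⟩ := hN (initialWord x N) (length_initialWord x N).ge
  exact ⟨β, initialWord x N, shift N x, by simp [← hβ (shift N x)], by simp⟩

lemma infinite_setOf_tailEq (d : Cantor) : {u | TailEq u d}.Infinite := by
  refine infinite_of_injective_forall_mem (f := fun n ↦ Function.update d n (!d n)) ?_ ?_
  · intro m n hmn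
    by_contra hne
    simpa [hne] using congr_fun hmn m
  · refine fun n ↦ tailEq_iff_exists_shift_eq.2 ⟨n + 1, n + 1, funext fun k ↦ ?_⟩
    exact Function.update_of_ne (by omega) _ _

lemma TailEq.exists_disjoint_cone {x y : Cantor} (h : TailEq x y) (hne : x ≠ y) {F : Set Cantor}
    (hF : F.Finite) (hx : x ∉ F) (hy : y ∉ F) :
    ∃ α β w, wcat α w = x ∧ wcat β w = y ∧ Disjoint (cone α) (cone β) ∧
      ∀ f ∈ F, f ∉ cone α ∧ f ∉ cone β := by
  obtain ⟨m, n, hmn⟩ := tailEq_iff_exists_shift_eq.1 h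
  have eventually_avoid {z : Cantor} {S : Set Cantor} (hS : S.Finite) (hz : z ∉ S) (k : ℕ) :
      ∀ᶠ N in atTop, ∀ f ∈ S, f ∉ cone (initialWord z (k + N)) :=
    (eventually_all_finite hS).2 fun f hf ↦ by
      have hk : Tendsto (k + ·) atTop atTop :=
        tendsto_atTop_mono (fun N ↦ Nat.le_add_left N k) tendsto_id
      exact hk.eventually (eventually_notMem_cone_initialWord (ne_of_mem_of_not_mem hf hz))
  obtain ⟨N, hNx, hNy⟩ :=
    ((eventually_avoid (hF.insert y) (z := x) (by simp [hne, hx]) m).and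
      (eventually_avoid (hF.insert x) (z := y) (by simp [hne.symm, hy]) n)).exists
  refine ⟨initialWord x (m + N), initialWord y (n + N), shift (m + N) x, by simp, ?_, ?_,
    fun f hf ↦ ⟨hNx f (.inr hf), hNy f (.inr hf)⟩⟩
  · rw [← shift_shift, hmn, shift_shift, wcat_initialWord_shift]
  · exact disjoint_cone_of_notMem (mem_cone_initialWord x _) (mem_cone_initialWord y _)
      (hNy x (.inl rfl)) (hNx y (.inl rfl))

lemma TailEq.exists_isPrefixSubst_apply_eq {x y : Cantor} (h : TailEq x y) {F : Set Cantor}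
    (hF : F.Finite) (hx : x ∉ F) (hy : y ∉ F) :
    ∃ g, IsPrefixSubst g ∧ g x = y ∧ ∀ f ∈ F, g f = f := by
  rcases eq_or_ne x y with rfl | hne
  · exact ⟨1, isPrefixSubst_one, rfl, fun _ _ ↦ rfl⟩
  obtain ⟨α, β, w, rfl, rfl, hdisj, hFαβ⟩ := h.exists_disjoint_cone hne hF hx hy
  exact ⟨(involutive_coneSwap hdisj).toPerm, isPrefixSubst_coneSwap hdisj,
    coneSwap_wcat_left α β w, fun f hf ↦ coneSwap_of_notMem (hFαβ f hf).1 (hFαβ f hf).2⟩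

/-- The tail class of `d`, as a set on which Thompson's group `V` acts. -/
def tailClass (d : Cantor) : SubMulAction thompsonV Cantor where
  carrier := {u | TailEq u d}
  smul_mem' g _ hu := (g.2.tailEq_apply _).trans hu

instance (d : Cantor) : Infinite (tailClass d) := (infinite_setOf_tailEq d).to_subtype

lemma isMultiplyPretransitive_tailClass (d : Cantor) (n : ℕ) :
    IsMultiplyPretransitive thompsonV (tailClass d) n := by
  refine isMultiplyPretransitive_of_forall_exists_smul_eq (fun F hF x hx y hy ↦ ?_) n
  obtain ⟨g, hg, hgx, hgF⟩ := (x.2.trans y.2.symm).exists_isPrefixSubst_apply_eq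
    (hF.image Subtype.val) (by simpa using hx) (by simpa using hy)
  exact ⟨⟨g, hg⟩, Subtype.ext hgx, fun f hf ↦ Subtype.ext (hgF f (mem_image_of_mem _ hf))⟩

/-! ### Maximal subgroups of `V` -/

lemma setStab_eq_map_stabilizer (D : Set Cantor) :
    setStab D = (stabilizer thompsonV D).map thompsonV.subtype := by
  ext g
  constructor
  · rintro ⟨hg, hgD⟩
    exact ⟨⟨g, hg⟩, hgD, rfl⟩
  · rintro ⟨g, hgD, rfl⟩
    exact ⟨g.2, hgD⟩

lemma isMaximalSubgroupOfV_map_subtype_of_isCoatom {S : Subgroup thompsonV} (hS : IsCoatom S) :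
    IsMaximalSubgroupOfV (S.map thompsonV.subtype : Subgroup (Equiv.Perm Cantor)) := by
  refine ⟨⟨one_mem _, fun _ hg _ hh ↦ mul_mem hg hh, fun _ hg ↦ inv_mem hg⟩,
    Subgroup.map_subtype_le S, fun hV ↦ hS.1 ?_, ?_⟩
  · exact eq_top_iff.2 fun g _ ↦ by simpa using hV.ge g.2
  · rintro H ⟨hone, hmul, hinv⟩ hSH hHV
    let H' : Subgroup (Equiv.Perm Cantor) :=
      { carrier := H
        one_mem' := hone
        mul_mem' := fun hg hh ↦ hmul _ hg _ hh
        inv_mem' := fun hg ↦ hinv _ hg }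
    have hH' : (H'.subgroupOf thompsonV).map thompsonV.subtype = H' :=
      Subgroup.map_subgroupOf_eq_of_le hHV
    have hle : S ≤ H'.subgroupOf thompsonV := Subgroup.map_le_iff_le_comap.1 hSH
    rcases hS.le_iff.1 hle with htop | heq
    · exact .inr (hHV.antisymm (Subgroup.subgroupOf_eq_top.1 htop))
    · exact .inl (congr_arg SetLike.coe (heq ▸ hH').symm)

/-- The setwise stabilizer of a nonempty finite subset of Cantor space
whose elements all lie in the same tail class is a maximal subgroup of Thompson's
group `V`. -/
theorem stabilizer_of_finite_tail_class_isMaximal (D : Set Cantor)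
    (hne : D.Nonempty) (hfin : D.Finite)
    (htail : ∀ u ∈ D, ∀ v ∈ D, TailEq u v) :
    IsMaximalSubgroupOfV (setStab D) := by
  obtain ⟨d, hd⟩ := hne
  let D' : Set (tailClass d) := Subtype.val ⁻¹' D
  have hD' : (tailClass d).inclusion '' D' = D :=
    (Subtype.image_preimage_coe _ _).trans (inter_eq_right.2 fun u hu ↦ htail u hu d hd)
  have hcoatom : IsCoatom (stabilizer thompsonV D') :=
    isCoatom_stabilizer_of_forall_isMultiplyPretransitive (isMultiplyPretransitive_tailClass d)
      ⟨⟨d, htail d hd d hd⟩, hd⟩ (hfin.preimage Subtype.val_injective.injOn)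
  rw [← stabilizer_image_of_injective _ (tailClass d).inclusion_injective, hD'] at hcoatom
  rw [setStab_eq_map_stabilizer]
  exact isMaximalSubgroupOfV_map_subtype_of_isCoatom hcoatom
end

section
/- The semigroup, under pointwise addition, of all continuous not-identically-zero functions from Cantor space 𝔠 to ℕ (ℕ given the discrete topology) is isomorphic to the additively written commutative semigroup with presentation having one generator x_α for each address α ∈ Ω and relations x_α = x_{α0} + x_{α1} for each α ∈ Ω, via the isomorphism sending x_α to the characteristic function χ_α of the cone α𝔠. -/
/-- The characteristic function `χ_α : 𝔠 → ℕ` of the cone of `α`. -/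
noncomputable def chi (α : Addr) : Cantor → ℕ := (cone α).indicator fun _ => 1

lemma mem_cone_iff (α : Addr) (w : Cantor) :
    w ∈ cone α ↔ ∀ i : Fin α.length, w i = α.get i := by
  constructor
  · rintro ⟨v, rfl⟩ i
    simp [wcat, i.isLt]
  · intro h
    refine ⟨fun n => w (n + α.length), ?_⟩
    funext n
    by_cases hn : n < α.length
    · simpa [wcat, hn] using (h ⟨n, hn⟩).symm
    · have hn' : n - α.length + α.length = n := by omega
      simp [wcat, hn, hn']

lemma isClopen_cone (α : Addr) : IsClopen (cone α) := by
  have h : cone α = ⋂ i : Fin α.length, (fun w : Cantor => w i) ⁻¹' {α.get i} := by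
    ext w
    simp [mem_cone_iff, Set.mem_iInter]
  constructor
  · rw [h]
    exact isClosed_iInter fun i =>
      (isClosed_discrete _).preimage (continuous_apply _)
  · rw [h]
    exact isOpen_iInter_of_finite fun i =>
      (isOpen_discrete _).preimage (continuous_apply _)

lemma continuous_chi (α : Addr) : Continuous (chi α) := by
  classical
  have h : chi α = (fun b : Bool => if b then 1 else 0) ∘ (cone α).boolIndicator := by
    funext w
    by_cases hw : w ∈ cone α <;>
      simp [chi, Set.indicator, Set.boolIndicator, hw]
  rw [h]
  exact continuous_of_discreteTopology.comp
    ((continuous_boolIndicator_iff_isClopen _).2 (isClopen_cone α))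

lemma chi_ne_zero (α : Addr) : chi α ≠ 0 := by
  intro h
  have hx : wcat α (fun _ => false) ∈ cone α := ⟨_, rfl⟩
  have h1 := congrFun h (wcat α (fun _ => false))
  rw [chi, Set.indicator_of_mem hx] at h1
  exact one_ne_zero h1

/-- The semigroup of continuous, not identically zero, functions `𝔠 → ℕ`
(under pointwise addition). -/
def CFn : Type := { f : Cantor → ℕ // Continuous f ∧ f ≠ 0 }

noncomputable instance : Add CFn :=
  ⟨fun f g =>
    ⟨f.1 + g.1, f.2.1.add g.2.1, by
      intro h
      apply f.2.2
      funext x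
      have hx := congrFun h x
      simp only [Pi.add_apply, Pi.zero_apply, Nat.add_eq_zero] at hx
      simpa using hx.1⟩⟩

/-- The characteristic function of the cone of `α`, as an element of the semigroup of
continuous nonzero functions `𝔠 → ℕ`. -/
noncomputable def chiS (α : Addr) : CFn := ⟨chi α, continuous_chi α, chi_ne_zero α⟩

open Set

/-! ### Continuous functions on Cantor space -/

lemma exists_finset_dependsOn {ι Y : Type*} {X : ι → Type*} [∀ i, TopologicalSpace (X i)]
    [CompactSpace (∀ i, X i)] [TopologicalSpace Y] [DiscreteTopology Y] {f : (∀ i, X i) → Y}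
    (hf : Continuous f) : ∃ I : Finset ι, DependsOn f (I : Set ι) := by
  classical
  have exists_box (x : ∀ i, X i) : ∃ (I : Finset ι) (u : ∀ i, Set (X i)),
      (I : Set ι).pi u ∈ nhds x ∧ ∀ z ∈ (I : Set ι).pi u, f z = f x := by
    obtain ⟨I, u, hu, hsub⟩ :=
      isOpen_pi_iff.1 ((isOpen_discrete {f x}).preimage hf) x rfl
    exact ⟨I, u, set_pi_mem_nhds I.finite_toSet fun i hi => (hu i hi).1.mem_nhds (hu i hi).2, hsub⟩
  choose I u hu hf_box using exists_box
  obtain ⟨t, ht⟩ := CompactSpace.elim_nhds_subcover _ hu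
  refine ⟨t.biUnion I, fun z z' hzz' => ?_⟩
  obtain ⟨x, hxt, hz⟩ := mem_iUnion₂.1 (ht.ge (mem_univ z))
  have hz' : z' ∈ (I x : Set ι).pi (u x) := fun i hi =>
    hzz' i (Finset.mem_biUnion.2 ⟨x, hxt, hi⟩) ▸ hz i hi
  exact (hf_box x z hz).trans (hf_box x z' hz').symm

lemma exists_dependsOn_Iio {Y : Type*} {X : ℕ → Type*} [∀ i, TopologicalSpace (X i)]
    [CompactSpace (∀ i, X i)] [TopologicalSpace Y] [DiscreteTopology Y] {f : (∀ i, X i) → Y}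
    (hf : Continuous f) : ∃ n, DependsOn f (Iio n) := by
  obtain ⟨I, hI⟩ := exists_finset_dependsOn hf
  obtain ⟨n, hn⟩ := I.exists_nat_subset_range
  exact ⟨n, hI.mono fun i hi => Finset.mem_range.1 (hn hi)⟩

/-! ### Cones -/

lemma ofFn_snoc {A : Type*} {n : ℕ} (γ : Fin n → A) (a : A) :
    List.ofFn (Fin.snoc γ a : Fin (n + 1) → A) = List.ofFn γ ++ [a] := by
  rw [List.ofFn_succ', List.concat_eq_append]
  simp only [Fin.snoc_castSucc, Fin.snoc_last]

lemma mem_cone_ofFn {n : ℕ} {γ : Fin n → Bool} {w : Cantor} :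
    w ∈ cone (List.ofFn γ) ↔ ∀ i : Fin n, w i = γ i := by
  rw [mem_cone_iff]
  exact (finCongr List.length_ofFn).forall_congr fun i => by simp [Fin.cast]

lemma mem_cone_append_singleton {α : Addr} {b : Bool} {w : Cantor} :
    w ∈ cone (α ++ [b]) ↔ w ∈ cone α ∧ w α.length = b := by
  induction α using List.ofFnRec with
  | h n γ =>
    rw [← ofFn_snoc, mem_cone_ofFn, mem_cone_ofFn, Fin.forall_fin_succ']
    simp

lemma chi_ofFn {n : ℕ} (γ : Fin n → Bool) (w : Cantor) :
    chi (List.ofFn γ) w = if (fun i : Fin n => w i) = γ then 1 else 0 := by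
  classical
  simp only [chi, indicator_apply, mem_cone_ofFn, funext_iff]

/-- The infinite word `α000…`, at which a function is sampled to obtain its value on the cone
of `α`. -/
def basePoint (α : Addr) : Cantor := wcat α fun _ => false

lemma basePoint_mem_cone (α : Addr) : basePoint α ∈ cone α := mem_range_self _

lemma basePoint_ofFn {n : ℕ} (γ : Fin n → Bool) :
    (fun i : Fin n => basePoint (List.ofFn γ) i) = γ :=
  funext (mem_cone_ofFn.1 (basePoint_mem_cone _))

lemma dependsOn_chi (α : Addr) : DependsOn (chi α) (Iio α.length) := by
  classical
  intro w w' h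
  have mem_iff : w ∈ cone α ↔ w' ∈ cone α := by
    simp only [mem_cone_iff]
    exact forall_congr' fun i => by rw [h i i.isLt]
  simp only [chi, indicator_apply, mem_iff]

lemma apply_eq_of_mem_cone {Y : Type*} {f : Cantor → Y} {α : Addr}
    (hf : DependsOn f (Iio α.length)) {w w' : Cantor} (hw : w ∈ cone α) (hw' : w' ∈ cone α) :
    f w = f w' := by
  rw [mem_cone_iff] at hw hw'
  exact hf fun i hi => (hw ⟨i, hi⟩).trans (hw' ⟨i, hi⟩).symm

/-- The defining relations `x_α = x_{α0} + x_{α1}` of the presentation, for a family `y` in place of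
the generators `x`. -/
def ConeRelations {M : Type*} [Add M] (y : Addr → M) : Prop :=
  ∀ α, y α = y (α ++ [false]) + y (α ++ [true])

lemma coneRelations_chi : ConeRelations chi := by
  classical
  intro α
  funext w
  simp only [chi, indicator_apply, Pi.add_apply, mem_cone_append_singleton]
  by_cases h : w ∈ cone α <;> cases w α.length <;> simp [h]

lemma coneRelations_chiS : ConeRelations chiS := fun α => Subtype.ext (coneRelations_chi α)

/-! ### Level sums -/

section LevelSum

variable {M : Type*} [AddCommMonoid M] {y : Addr → M} {f : Cantor → ℕ} {m n : ℕ}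

/-- The sum of `f (γ000…) • y γ` over the words `γ` of length `n`: the value that an additive map
sending each `χ_γ` to `y γ` must take at a function `f` depending on the first `n` letters only. It
is defined for all functions `f`, so as to be additive in `f`. -/
def levelSum (y : Addr → M) (n : ℕ) : (Cantor → ℕ) →+ M where
  toFun f := ∑ γ : Fin n → Bool, f (basePoint (List.ofFn γ)) • y (List.ofFn γ)
  map_zero' := by simp
  map_add' f g := by simp [add_nsmul, Finset.sum_add_distrib]

lemma levelSum_apply (y : Addr → M) (n : ℕ) (f : Cantor → ℕ) :
    levelSum y n f = ∑ γ : Fin n → Bool, f (basePoint (List.ofFn γ)) • y (List.ofFn γ) :=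
  rfl

lemma levelSum_chi_eq_self (hf : DependsOn f (Iio n)) : levelSum chi n f = f := by
  funext w
  have hw : w ∈ cone (List.ofFn fun i : Fin n => w i) := mem_cone_ofFn.2 fun _ => rfl
  have hfw : f (basePoint (List.ofFn fun i : Fin n => w i)) = f w :=
    apply_eq_of_mem_cone (by rwa [List.length_ofFn]) (basePoint_mem_cone _) hw
  simp [levelSum_apply, Finset.sum_apply, chi_ofFn, hfw]

lemma levelSum_chi (y : Addr → M) (α : Addr) : levelSum y α.length (chi α) = y α := by
  induction α using List.ofFnRec with
  | h n γ =>
    rw [List.length_ofFn, levelSum_apply]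
    simp [chi_ofFn, basePoint_ofFn, ite_smul]

lemma levelSum_succ (hy : ConeRelations y) (hf : DependsOn f (Iio n)) :
    levelSum y (n + 1) f = levelSum y n f := by
  have hf_child (γ : Fin n → Bool) (b : Bool) :
      f (basePoint (List.ofFn γ ++ [b])) = f (basePoint (List.ofFn γ)) :=
    apply_eq_of_mem_cone (by rwa [List.length_ofFn])
      (mem_cone_append_singleton.1 (basePoint_mem_cone _)).1 (basePoint_mem_cone _)
  calc levelSum y (n + 1) f
    _ = ∑ p : Bool × (Fin n → Bool),
          f (basePoint (List.ofFn p.2 ++ [p.1])) • y (List.ofFn p.2 ++ [p.1]) := by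
      rw [levelSum_apply, ← (Fin.snocEquiv fun _ => Bool).sum_comp]
      simp only [Fin.snocEquiv, Equiv.coe_fn_mk, ofFn_snoc]
    _ = ∑ γ : Fin n → Bool, f (basePoint (List.ofFn γ)) •
          (y (List.ofFn γ ++ [false]) + y (List.ofFn γ ++ [true])) := by
      simp only [Fintype.sum_prod_type_right, hf_child, Fintype.sum_bool, ← nsmul_add, add_comm]
    _ = levelSum y n f := by simp only [← hy _, levelSum_apply]

lemma levelSum_eq_levelSum (hy : ConeRelations y) (hm : DependsOn f (Iio m))
    (hn : DependsOn f (Iio n)) : levelSum y m f = levelSum y n f := by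
  wlog hmn : m ≤ n generalizing m n
  · exact (this hn hm (le_of_not_ge hmn)).symm
  induction n, hmn using Nat.le_induction with
  | base => rfl
  | succ n hmn ih =>
    have hn : DependsOn f (Iio n) := hm.mono (Iio_subset_Iio hmn)
    rw [levelSum_succ hy hn, ih hn]

lemma eq_zero_of_levelSum_eq_zero [Subsingleton (AddUnits M)] (hy : ∀ α, y α ≠ 0)
    (hf : DependsOn f (Iio n)) (h : levelSum y n f = 0) : f = 0 := by
  rw [levelSum_apply, Finset.sum_eq_zero_iff] at h
  have hf_base (γ : Fin n → Bool) : f (basePoint (List.ofFn γ)) = 0 := by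
    by_contra hne
    have hunit := isAddUnit_iff_eq_zero.2 (h γ (Finset.mem_univ γ))
    exact hy _ (isAddUnit_iff_eq_zero.1 ((isAddUnit_nsmul_iff hne).1 hunit))
  rw [← levelSum_chi_eq_self hf, levelSum_apply]
  simp only [hf_base, zero_smul, Finset.sum_const_zero]

end LevelSum

/-! ### The universal property among monoids -/

lemma mem_addSubmonoid_of_continuous {S : AddSubmonoid (Cantor → ℕ)} (hS : ∀ α, chi α ∈ S)
    {f : Cantor → ℕ} (hf : Continuous f) : f ∈ S := by
  obtain ⟨n, hn⟩ := exists_dependsOn_Iio hf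
  rw [← levelSum_chi_eq_self hn]
  exact sum_mem fun γ _ => nsmul_mem (hS _) _

namespace ConeRelations

variable {M : Type*} [AddCommMonoid M] {y : Addr → M}

/-- The additive map on the monoid of all continuous functions `𝔠 → ℕ`, zero included, that sends
`χ_α` to `y α`: the level sum at any level that determines `f`. -/
noncomputable def lift (hy : ConeRelations y) : C(Cantor, ℕ) →+ M where
  toFun f := levelSum y (exists_dependsOn_Iio f.continuous).choose f
  map_zero' := map_zero (levelSum y _)
  map_add' f g := by
    obtain ⟨n, hn⟩ := exists_dependsOn_Iio (f.continuous.prodMk g.continuous)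
    have hf : DependsOn f (Iio n) := fun _ _ h => congrArg Prod.fst (hn h)
    have hg : DependsOn g (Iio n) := fun _ _ h => congrArg Prod.snd (hn h)
    have hfg : DependsOn (f + g) (Iio n) := fun _ _ h => congrArg₂ (· + ·) (hf h) (hg h)
    have level_eq {h : C(Cantor, ℕ)} (hh : DependsOn h (Iio n)) :=
      levelSum_eq_levelSum hy (exists_dependsOn_Iio h.continuous).choose_spec hh
    rw [level_eq hf, level_eq hg, level_eq hfg, ContinuousMap.coe_add, map_add]

lemma lift_eq_levelSum (hy : ConeRelations y) {f : C(Cantor, ℕ)} {n : ℕ}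
    (hf : DependsOn f (Iio n)) : hy.lift f = levelSum y n f :=
  levelSum_eq_levelSum hy (exists_dependsOn_Iio f.continuous).choose_spec hf

lemma lift_chi (hy : ConeRelations y) (α : Addr) : hy.lift ⟨chi α, continuous_chi α⟩ = y α :=
  (hy.lift_eq_levelSum (dependsOn_chi α)).trans (levelSum_chi y α)

lemma lift_ne_zero [Subsingleton (AddUnits M)] (hy : ConeRelations y) (hy₀ : ∀ α, y α ≠ 0)
    {f : C(Cantor, ℕ)} (hf : f ≠ 0) : hy.lift f ≠ 0 := fun h =>
  hf <| DFunLike.coe_injective <|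
    eq_zero_of_levelSum_eq_zero hy₀ (exists_dependsOn_Iio f.continuous).choose_spec h

end ConeRelations

/-! ### The universal property among semigroups -/

instance subsingleton_addUnits_withZero {T : Type*} [AddSemigroup T] :
    Subsingleton (AddUnits (WithZero T)) := by
  refine subsingleton_of_forall_eq 0 fun u => AddUnits.ext ?_
  have h := u.val_neg
  cases hu : u.val with
  | zero => rfl
  | coe a =>
    cases hv : (-u).val with
    | zero => simp [hu, hv] at h
    | coe b => simp [hu, hv, ← WithZero.coe_add] at h

namespace CFn

/-- The inclusion of the semigroup `CFn` into the monoid of all continuous functions `𝔠 → ℕ`. -/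
def toContinuousMap : AddHom CFn C(Cantor, ℕ) where
  toFun f := ⟨f.1, f.2.1⟩
  map_add' _ _ := rfl

lemma toContinuousMap_ne_zero (f : CFn) : toContinuousMap f ≠ 0 := fun h =>
  f.2.2 (congrArg DFunLike.coe h)

@[elab_as_elim]
lemma induction {P : CFn → Prop} (generator : ∀ α, P (chiS α))
    (add : ∀ f g, P f → P g → P (f + g)) (f : CFn) : P f := by
  -- The level sum of `f` may have zero terms, which are not in `CFn`.
  let S : AddSubmonoid (Cantor → ℕ) :=
    { carrier := {g | g = 0 ∨ ∃ h : CFn, h.1 = g ∧ P h}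
      zero_mem' := Or.inl rfl
      add_mem' := by
        rintro _ _ (rfl | ⟨g, rfl, hg⟩) (rfl | ⟨h, rfl, hh⟩)
        · exact Or.inl (add_zero 0)
        · exact Or.inr ⟨h, (zero_add _).symm, hh⟩
        · exact Or.inr ⟨g, (add_zero _).symm, hg⟩
        · exact Or.inr ⟨g + h, rfl, add g h hg hh⟩ }
  have hS (α : Addr) : (chiS α).1 ∈ S := Or.inr ⟨chiS α, rfl, generator α⟩
  obtain hf | ⟨g, hgf, hg⟩ := mem_addSubmonoid_of_continuous hS f.2.1
  · exact absurd hf f.2.2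
  · exact Subtype.ext hgf ▸ hg

lemma addHom_ext {T : Type*} [Add T] {Φ Ψ : AddHom CFn T}
    (h : ∀ α, Φ (chiS α) = Ψ (chiS α)) : Φ = Ψ := by
  ext f
  induction f using CFn.induction with
  | generator α => exact h α
  | add f g hf hg => rw [map_add, map_add, hf, hg]

end CFn

namespace ConeRelations

variable {T : Type*} [AddCommSemigroup T] {y : Addr → T}

lemma withZero (hy : ConeRelations y) : ConeRelations fun α => (y α : WithZero T) := fun α =>
  (congrArg _ (hy α)).trans (WithZero.coe_add _ _)

lemma lift_withZero_ne_zero (hy : ConeRelations y) (f : CFn) :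
    hy.withZero.lift f.toContinuousMap ≠ 0 :=
  hy.withZero.lift_ne_zero (fun _ => WithZero.coe_ne_zero) f.toContinuousMap_ne_zero

/-- The additive map on the semigroup `CFn` that sends `χ_α` to `y α`. -/
noncomputable def semigroupLift (hy : ConeRelations y) : AddHom CFn T where
  toFun f := WithZero.unzero (hy.lift_withZero_ne_zero f)
  map_add' f g := WithZero.coe_injective <| by
    simp only [WithZero.coe_add, WithZero.coe_unzero, map_add]

lemma semigroupLift_chiS (hy : ConeRelations y) (α : Addr) : hy.semigroupLift (chiS α) = y α :=
  WithZero.coe_injective <| (WithZero.coe_unzero _).trans (hy.withZero.lift_chi α)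

end ConeRelations

/-- The semigroup of continuous not-identically-zero functions
`𝔠 → ℕ` under pointwise addition is isomorphic, via `x_α ↦ χ_α`, to the commutative
semigroup with presentation `⟨ x_α (α ∈ Ω) ∣ x_α = x_{α0} + x_{α1} ⟩`: the elements
`χ_α` satisfy the defining relations, and the pair `(CFn, χ)` enjoys the universal
property of that presentation (for every commutative semigroup `T` and every
assignment `y` of the generators satisfying the relations there is a unique additive
map extending it). -/
theorem semigroup_of_continuous_functions_presentation :
    (∀ α : Addr, chiS α = chiS (α ++ [false]) + chiS (α ++ [true])) ∧
    ∀ (T : Type) [AddCommSemigroup T] (y : Addr → T),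
      (∀ α : Addr, y α = y (α ++ [false]) + y (α ++ [true])) →
      ∃! Φ : CFn → T,
        (∀ f g : CFn, Φ (f + g) = Φ f + Φ g) ∧ ∀ α : Addr, Φ (chiS α) = y α := by
  refine ⟨coneRelations_chiS, fun T _ y (hy : ConeRelations y) => ?_⟩
  refine ⟨hy.semigroupLift, ⟨map_add hy.semigroupLift, hy.semigroupLift_chiS⟩, ?_⟩
  rintro Ψ ⟨hΨ_add, hΨ_chi⟩
  have hΨ : (⟨Ψ, hΨ_add⟩ : AddHom CFn T) = hy.semigroupLift :=
    CFn.addHom_ext fun α => (hΨ_chi α).trans (hy.semigroupLift_chiS α).symm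
  exact congrArg DFunLike.coe hΨ
end

section
/- Let 𝒫 be a multinuclear type system on Ω with nuclei 𝒬⁽¹⁾,…,𝒬⁽ᵏ⁾. Then for each i the subsemigroup Gᵢ of S(𝒫) generated by the generators corresponding to the types in 𝒬⁽ⁱ⁾ has the structure of a group; in particular, if 𝒫 is nuclear (k = 1), then S(𝒫) itself is a group. -/
/-- A relation on addresses is coherent if `α ∼ β` implies `α0 ∼ β0` and `α1 ∼ β1`. -/
def Coherent (r : Addr → Addr → Prop) : Prop :=
  ∀ α β, r α β → r (α ++ [false]) (β ++ [false]) ∧ r (α ++ [true]) (β ++ [true])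

/-- A relation on addresses is reduced if `α0 ∼ β0` and `α1 ∼ β1` imply `α ∼ β`. -/
def Reduced (r : Addr → Addr → Prop) : Prop :=
  ∀ α β, r (α ++ [false]) (β ++ [false]) → r (α ++ [true]) (β ++ [true]) → r α β

/-- A type system: a coherent and reduced equivalence relation on addresses
(identified with the partition of `Ω` into its classes). -/
def IsTypeSystem (r : Addr → Addr → Prop) : Prop :=
  Equivalence r ∧ Coherent r ∧ Reduced r

/-- `g` fixes the parts of `r`: for all but finitely many addresses `α`, the image
`α ^ g` is defined and equivalent to `α`. -/
def FixesParts (r : Addr → Addr → Prop) (g : Equiv.Perm Cantor) : Prop :=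
  { α : Addr | ¬ ∃ β, actsOn g α β ∧ r α β }.Finite

/-- `g` stabilizes `r`: on some cofinite set of addresses, `α ^ g` is defined and `g`
preserves equivalence and inequivalence of addresses. -/
def Stabilizes (r : Addr → Addr → Prop) (g : Equiv.Perm Cantor) : Prop :=
  ∃ Ω₀ : Set Addr, Ω₀ᶜ.Finite ∧ (∀ α ∈ Ω₀, ∃ β, actsOn g α β) ∧
    ∀ α ∈ Ω₀, ∀ α' ∈ Ω₀, ∀ β β', actsOn g α β → actsOn g α' β' → (r α α' ↔ r β β')

/-- `Fix_V(𝒫)`: the elements of Thompson's group `V` fixing the parts of `r`. -/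
def FixSet (r : Addr → Addr → Prop) : Set (Equiv.Perm Cantor) :=
  { g | IsPrefixSubst g ∧ FixesParts r g }

/-- `Stab_V(𝒫)`: the elements of Thompson's group `V` stabilizing `r`. -/
def StabSet (r : Addr → Addr → Prop) : Set (Equiv.Perm Cantor) :=
  { g | IsPrefixSubst g ∧ Stabilizes r g }

/-- The type system of `s` is a quotient of that of `r`. -/
def IsQuotientOf (s r : Addr → Addr → Prop) : Prop :=
  IsTypeSystem s ∧ ∀ α β, r α β → s α β

/-- A simple type system: the universal relation is a proper quotient, and every
quotient is either the type system itself or the universal one. -/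
def SimpleTS (r : Addr → Addr → Prop) : Prop :=
  IsTypeSystem r ∧ (∃ α β : Addr, ¬ r α β) ∧
    ∀ s : Addr → Addr → Prop, IsQuotientOf s r →
      (∀ α β, s α β ↔ r α β) ∨ ∀ α β, s α β

/-- The type (equivalence class) of the address `α`. -/
def typeOf (r : Addr → Addr → Prop) (α : Addr) : Set Addr := { β | r α β }

/-- `S` is a union of `r`-classes, i.e. a set of types of the type system. -/
def Saturated (r : Addr → Addr → Prop) (S : Set Addr) : Prop :=
  ∀ α ∈ S, ∀ β, r α β → β ∈ S

/-- `S` is child-closed: with each address (type) it contains both of its children. -/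
def ChildClosed (S : Set Addr) : Prop :=
  ∀ α ∈ S, α ++ [false] ∈ S ∧ α ++ [true] ∈ S

/-- The word `γ` determines a path through `S` from (the type of) `α`. -/
def PathThrough (S : Set Addr) (α γ : Addr) : Prop :=
  ∀ ζ : Addr, ζ <+: γ → α ++ ζ ∈ S

/-- `S` is strongly connected. -/
def StronglyConnected (r : Addr → Addr → Prop) (S : Set Addr) : Prop :=
  ∀ α ∈ S, ∀ β ∈ S, ∃ γ : Addr, γ ≠ [] ∧ PathThrough S α γ ∧ r (α ++ γ) β

/-- A nucleus: a (nonempty) child-closed and strongly connected set of types. -/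
def IsNucleus (r : Addr → Addr → Prop) (S : Set Addr) : Prop :=
  S.Nonempty ∧ Saturated r S ∧ ChildClosed S ∧ StronglyConnected r S

/-- `S` consists of exactly one type. -/
def IsSingleType (r : Addr → Addr → Prop) (S : Set Addr) : Prop :=
  ∃ α : Addr, S = typeOf r α

/-- A multinuclear type system: finitely many pairwise disjoint nuclei containing the
types of all sufficiently long addresses. -/
def Multinuclear (r : Addr → Addr → Prop) : Prop :=
  ∃ (k : ℕ) (Q : Fin k → Set Addr), 0 < k ∧ (∀ i, IsNucleus r (Q i)) ∧
    (∀ i j, i ≠ j → Disjoint (Q i) (Q j)) ∧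
    ∃ t : ℕ, 0 < t ∧ ∀ α : Addr, t ≤ α.length → ∃ i, α ∈ Q i

/-- A nuclear type system: a single nucleus containing the types of all sufficiently
long addresses. -/
def Nuclear (r : Addr → Addr → Prop) : Prop :=
  ∃ Q : Set Addr, IsNucleus r Q ∧ ∃ t : ℕ, 0 < t ∧ ∀ α : Addr, t ≤ α.length → α ∈ Q

/-- An atomic binuclear type system: two disjoint singleton nuclei containing the types
of all sufficiently long addresses. -/
def AtomicBinuclear (r : Addr → Addr → Prop) : Prop :=
  ∃ Q₁ Q₂ : Set Addr, IsNucleus r Q₁ ∧ IsNucleus r Q₂ ∧ Disjoint Q₁ Q₂ ∧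
    IsSingleType r Q₁ ∧ IsSingleType r Q₂ ∧
    ∃ t : ℕ, 0 < t ∧ ∀ α : Addr, t ≤ α.length → α ∈ Q₁ ∪ Q₂

/-- The data `(𝒬, ℛ)` witnessing that a type system is quasinuclear. -/
def QuasinuclearData (r : Addr → Addr → Prop) (Q R : Set Addr) : Prop :=
  Q.Nonempty ∧ R.Nonempty ∧ Saturated r Q ∧ Saturated r R ∧ Disjoint Q R ∧
    (∃ t : ℕ, 0 < t ∧ ∀ α : Addr, t ≤ α.length → α ∈ Q ∪ R) ∧
    IsNucleus r R ∧ StronglyConnected r Q ∧ ChildClosed (Q ∪ R) ∧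
    ∀ α ∈ Q, ∀ β ∈ R, ∃ γ : Addr, r (α ++ γ) β

/-- A quasinuclear type system. -/
def Quasinuclear (r : Addr → Addr → Prop) : Prop :=
  ∃ Q R : Set Addr, QuasinuclearData r Q R

/-- `𝒬†`: the types of `𝒬` both of whose children lie in `𝒬`. -/
def QDagger (Q : Set Addr) : Set Addr :=
  { α ∈ Q | α ++ [false] ∈ Q ∧ α ++ [true] ∈ Q }

/-- An atomic quasinuclear type system: the nucleus `ℛ` is a single type. -/
def AtomicQuasinuclear (r : Addr → Addr → Prop) : Prop :=
  ∃ Q R : Set Addr, QuasinuclearData r Q R ∧ IsSingleType r R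

/-- The defining relations of the semigroup `S(𝒫)`, with one generator for each
address (generators of equivalent addresses being identified): `x_α = x_{α0} + x_{α1}`
and `x_α = x_β` whenever `α ∼ β`.  Sums of generators are encoded as multisets. -/
def stypeRel (r : Addr → Addr → Prop) : Multiset Addr → Multiset Addr → Prop :=
  fun x y =>
    (∃ α : Addr, x = {α} ∧ y = {α ++ [false], α ++ [true]}) ∨
    (∃ α β : Addr, r α β ∧ x = {α} ∧ y = {β})

/-- The congruence presenting the semigroup `S(𝒫)`. -/
def stypeCon (r : Addr → Addr → Prop) : AddCon (Multiset Addr) :=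
  addConGen (stypeRel r)

/-- The multiset `m` encodes a decomposition of `U` into pairwise disjoint cones. -/
def Decomp (U : Set Cantor) (m : Multiset Addr) : Prop :=
  Multiset.Pairwise (fun a b => Disjoint (cone a) (cone b)) m ∧
    U = { w : Cantor | ∃ a ∈ m, w ∈ cone a }

/-- `U` and `U'` have the same s-type: some (equivalently, any) decompositions of `U`
and `U'` into disjoint cones have identified images in `S(𝒫)`. -/
def SameSType (r : Addr → Addr → Prop) (U U' : Set Cantor) : Prop :=
  ∃ m m' : Multiset Addr, m ≠ 0 ∧ m' ≠ 0 ∧ Decomp U m ∧ Decomp U' m' ∧ stypeCon r m m'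

/-- The image in `S(𝒫)` of the nonzero multisets supported on `S` : the subsemigroup
generated by the generators corresponding to the types in `S`. -/
def subSemigroupOn (r : Addr → Addr → Prop) (S : Set Addr) :
    Set (stypeCon r).Quotient :=
  { x | ∃ m : Multiset Addr, m ≠ 0 ∧ (∀ α ∈ m, α ∈ S) ∧ x = (stypeCon r).mk' m }

/-- The semigroup `S(𝒫)` inside the presented monoid: images of nonzero multisets. -/
def wholeSemigroup (r : Addr → Addr → Prop) : Set (stypeCon r).Quotient :=
  { x | ∃ m : Multiset Addr, m ≠ 0 ∧ x = (stypeCon r).mk' m }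

/-!
In a nucleus every type leads to every type by a nonempty path, and splitting an address along such
a path writes its generator as the generator at the end of the path plus the generators of the
siblings met on the way. So any generator of the nucleus can be split off any of them with a
nonempty remainder. This property passes from the generators to all elements of the subsemigroup `G`
they generate: `x + z = y` has a solution `z ∈ G` for all `x, y ∈ G`, which makes `G` a group.
If all long addresses lie in the nucleus, splitting often enough shows that `G` is all of `S(𝒫)`.
-/

/-- The set `G`, assumed closed under addition, forms a group under the addition of the ambient
semigroup. Its identity `e` need not be neutral outside `G`: in the quotient presenting `S(𝒫)`, the
zero is the empty sum, which is not an element of `S(𝒫)`. -/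
def FormsAddGroup {M : Type*} [AddSemigroup M] (G : Set M) : Prop :=
  ∃ e ∈ G, (∀ x ∈ G, x + e = x) ∧ ∀ x ∈ G, ∃ y ∈ G, x + y = e

theorem formsAddGroup_of_exists_add_eq {M : Type*} [AddCommSemigroup M] {G : Set M}
    (hne : G.Nonempty) (hG : ∀ x ∈ G, ∀ y ∈ G, ∃ z ∈ G, x + z = y) : FormsAddGroup G := by
  obtain ⟨a, ha⟩ := hne
  obtain ⟨e, he, hae⟩ := hG a ha a ha
  refine ⟨e, he, fun x hx => ?_, fun x hx => hG x hx e he⟩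
  obtain ⟨y, -, rfl⟩ := hG a ha x hx
  rw [add_right_comm, hae]

theorem exists_add_eq_of_mem_closure {M : Type*} [AddSemigroup M] {X : Set M}
    (hX : ∀ x ∈ X, ∀ y ∈ X, ∃ z ∈ AddSubsemigroup.closure X, x + z = y) {a b : M}
    (ha : a ∈ AddSubsemigroup.closure X) (hb : b ∈ AddSubsemigroup.closure X) :
    ∃ z ∈ AddSubsemigroup.closure X, a + z = b := by
  induction ha using AddSubsemigroup.closure_induction generalizing b with
  | mem x hx =>
    induction hb using AddSubsemigroup.closure_induction with
    | mem y hy => exact hX x hx y hy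
    | add b₁ b₂ _ hb₂ ih _ =>
      obtain ⟨z, hz, rfl⟩ := ih
      exact ⟨z + b₂, add_mem hz hb₂, (add_assoc x z b₂).symm⟩
  | add a₁ a₂ _ _ ih₁ ih₂ =>
    obtain ⟨z₁, hz₁, rfl⟩ := ih₁ hb
    obtain ⟨z₂, hz₂, rfl⟩ := ih₂ hz₁
    exact ⟨z₂, hz₂, add_assoc a₁ a₂ z₂⟩

/-- The generator of `S(𝒫)` corresponding to the type of `α`. It is indexed by addresses instead of
types, since `S(𝒫)` is presented as a quotient of `Multiset Addr`. -/
def gen (r : Addr → Addr → Prop) (α : Addr) : (stypeCon r).Quotient :=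
  (stypeCon r).mk' {α}

section

variable {r : Addr → Addr → Prop} {S : Set Addr}

theorem gen_eq_of_rel {α β : Addr} (h : r α β) : gen r α = gen r β :=
  (AddCon.eq _).2 (AddConGen.Rel.of _ _ (Or.inr ⟨α, β, h, rfl, rfl⟩))

theorem gen_eq_add_children (r : Addr → Addr → Prop) (α : Addr) :
    gen r α = gen r (α ++ [false]) + gen r (α ++ [true]) :=
  (AddCon.eq _).2 (AddConGen.Rel.of _ _ (Or.inl ⟨α, rfl, rfl⟩))

theorem mk'_eq_sum_map_gen (r : Addr → Addr → Prop) (m : Multiset Addr) :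
    (stypeCon r).mk' m = (m.map (gen r)).sum := by
  conv_lhs => rw [← Multiset.sum_map_singleton m]
  rw [map_multiset_sum, Multiset.map_map]
  rfl

theorem gen_mem_closure {α : Addr} (hα : α ∈ S) :
    gen r α ∈ AddSubsemigroup.closure (gen r '' S) :=
  AddSubsemigroup.subset_closure (Set.mem_image_of_mem _ hα)

theorem coe_closure_gen_image (r : Addr → Addr → Prop) (S : Set Addr) :
    (AddSubsemigroup.closure (gen r '' S) : Set (stypeCon r).Quotient) = subSemigroupOn r S := by
  ext x
  constructor
  · intro hx
    induction hx using AddSubsemigroup.closure_induction with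
    | mem x hx =>
      obtain ⟨α, hα, rfl⟩ := hx
      exact ⟨{α}, Multiset.singleton_ne_zero α, by simpa using hα, rfl⟩
    | add x y _ _ hx hy =>
      obtain ⟨m, hm, hmS, rfl⟩ := hx
      obtain ⟨n, -, hnS, rfl⟩ := hy
      refine ⟨m + n, by simp [hm], fun α hα => ?_, (map_add _ m n).symm⟩
      exact (Multiset.mem_add.1 hα).elim (hmS α) (hnS α)
  · rintro ⟨m, hm, hmS, rfl⟩
    rw [mk'_eq_sum_map_gen]
    refine Multiset.sum_induction_nonempty (· ∈ AddSubsemigroup.closure (gen r '' S))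
      (fun _ _ => add_mem) (by simpa using hm) fun x hx => ?_
    obtain ⟨α, hα, rfl⟩ := Multiset.mem_map.1 hx
    exact gen_mem_closure (hmS α hα)

theorem subSemigroupOn_univ (r : Addr → Addr → Prop) :
    subSemigroupOn r Set.univ = wholeSemigroup r := by
  simp [subSemigroupOn, wholeSemigroup]

theorem exists_gen_child_add_eq (hS : ChildClosed S) {α : Addr} (hα : α ∈ S) (b : Bool) :
    ∃ z ∈ AddSubsemigroup.closure (gen r '' S), gen r (α ++ [b]) + z = gen r α := by
  obtain ⟨h₀, h₁⟩ := hS α hα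
  rw [gen_eq_add_children r α]
  cases b with
  | false => exact ⟨_, gen_mem_closure h₁, rfl⟩
  | true => exact ⟨_, gen_mem_closure h₀, add_comm _ _⟩

theorem exists_gen_append_add_eq (hS : ChildClosed S) {α γ : Addr} (hα : α ∈ S) (hγ : γ ≠ []) :
    ∃ z ∈ AddSubsemigroup.closure (gen r '' S), gen r (α ++ γ) + z = gen r α := by
  induction γ generalizing α with
  | nil => exact absurd rfl hγ
  | cons b γ ih =>
    obtain ⟨z, hz, hbz⟩ := exists_gen_child_add_eq (r := r) hS hα b
    rcases eq_or_ne γ [] with rfl | hγ'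
    · exact ⟨z, hz, hbz⟩
    have hb : α ++ [b] ∈ S := by cases b; exacts [(hS α hα).1, (hS α hα).2]
    obtain ⟨z', hz', hγz⟩ := ih hb hγ'
    refine ⟨z' + z, add_mem hz' hz, ?_⟩
    rw [← add_assoc, List.append_cons, hγz, hbz]

theorem exists_gen_add_eq_gen (hcc : ChildClosed S) (hsc : StronglyConnected r S) {α β : Addr}
    (hα : α ∈ S) (hβ : β ∈ S) :
    ∃ z ∈ AddSubsemigroup.closure (gen r '' S), gen r α + z = gen r β := by
  obtain ⟨γ, hγ, -, hrel⟩ := hsc β hβ α hα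
  rw [← gen_eq_of_rel hrel]
  exact exists_gen_append_add_eq hcc hβ hγ

theorem formsAddGroup_subSemigroupOn (hne : S.Nonempty) (hcc : ChildClosed S)
    (hsc : StronglyConnected r S) : FormsAddGroup (subSemigroupOn r S) := by
  rw [← coe_closure_gen_image]
  refine formsAddGroup_of_exists_add_eq ?_ fun x hx y hy => exists_add_eq_of_mem_closure ?_ hx hy
  · exact hne.imp' (gen r) fun _ => gen_mem_closure
  · rintro _ ⟨α, hα, rfl⟩ _ ⟨β, hβ, rfl⟩
    exact exists_gen_add_eq_gen hcc hsc hα hβ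

theorem gen_mem_closure_of_forall_length {t : ℕ} (hS : ∀ α : Addr, t ≤ α.length → α ∈ S)
    (α : Addr) : gen r α ∈ AddSubsemigroup.closure (gen r '' S) := by
  by_cases hα : t ≤ α.length
  · exact gen_mem_closure (hS α hα)
  · rw [gen_eq_add_children]
    exact add_mem (gen_mem_closure_of_forall_length hS _) (gen_mem_closure_of_forall_length hS _)
termination_by t - α.length
decreasing_by all_goals (rw [List.length_append, List.length_singleton]; omega)

theorem subSemigroupOn_eq_wholeSemigroup {t : ℕ} (hS : ∀ α : Addr, t ≤ α.length → α ∈ S) :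
    subSemigroupOn r S = wholeSemigroup r := by
  rw [← subSemigroupOn_univ, ← coe_closure_gen_image, ← coe_closure_gen_image, SetLike.coe_set_eq]
  refine le_antisymm (AddSubsemigroup.closure_mono (Set.image_mono (Set.subset_univ S))) ?_
  rw [AddSubsemigroup.closure_le]
  rintro _ ⟨α, -, rfl⟩
  exact gen_mem_closure_of_forall_length hS α

end

theorem nucleus_subsemigroup_isGroup_general (r : Addr → Addr → Prop) (S : Set Addr)
    (hne : S.Nonempty) (hcc : ChildClosed S) (hsc : StronglyConnected r S) :
    FormsAddGroup (subSemigroupOn r S) ∧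
      ((∃ t : ℕ, ∀ α : Addr, t ≤ α.length → α ∈ S) → FormsAddGroup (wholeSemigroup r)) := by
  have hgroup := formsAddGroup_subSemigroupOn hne hcc hsc
  exact ⟨hgroup, fun ⟨_, hS⟩ => subSemigroupOn_eq_wholeSemigroup hS ▸ hgroup⟩

/-- For a multinuclear type system with nuclei `𝒬⁽¹⁾, …, 𝒬⁽ᵏ⁾`, each
subsemigroup `Gᵢ` of `S(𝒫)` generated by the generators corresponding to the types of
`𝒬⁽ⁱ⁾` has the structure of a group; in particular, if `𝒫` is nuclear (`k = 1`) then
`S(𝒫)` itself is a group. -/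
theorem nucleus_subsemigroup_isGroup (r : Addr → Addr → Prop) (hr : IsTypeSystem r)
    (k : ℕ) (hk : 0 < k) (Q : Fin k → Set Addr)
    (hnuc : ∀ i, IsNucleus r (Q i))
    (hdisj : ∀ i j, i ≠ j → Disjoint (Q i) (Q j))
    (t : ℕ) (ht : 0 < t) (hcover : ∀ α : Addr, t ≤ α.length → ∃ i, α ∈ Q i) :
    (∀ i, ∃ e ∈ subSemigroupOn r (Q i),
      (∀ x ∈ subSemigroupOn r (Q i), x + e = x) ∧
      ∀ x ∈ subSemigroupOn r (Q i), ∃ y ∈ subSemigroupOn r (Q i), x + y = e) ∧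
    (k = 1 → ∃ e ∈ wholeSemigroup r,
      (∀ x ∈ wholeSemigroup r, x + e = x) ∧
      ∀ x ∈ wholeSemigroup r, ∃ y ∈ wholeSemigroup r, x + y = e) := by
  have hgroup i :=
    nucleus_subsemigroup_isGroup_general r (Q i) (hnuc i).1 (hnuc i).2.2.1 (hnuc i).2.2.2
  refine ⟨fun i => (hgroup i).1, ?_⟩
  rintro rfl
  exact (hgroup 0).2 ⟨t, fun α hα => (hcover α hα).elim fun i hi => Subsingleton.elim i 0 ▸ hi⟩
end

section
/- Let 𝒫 be a simple type system on Ω. If 𝒮 is a nonempty child-closed subset of 𝒫 such that the complement 𝒫 \ 𝒮 contains a cycle, then 𝒮 consists of exactly one type. -/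
section

open Filter

theorem eventually_cofinite_list_iff_cons {A : Type*} [Finite A] {p : List A → Prop} :
    (∀ᶠ w in cofinite, p w) ↔ ∀ a, ∀ᶠ w in cofinite, p (a :: w) := by
  refine ⟨fun h a => (List.cons_injective (a := a)).tendsto_cofinite.eventually h, fun h => ?_⟩
  have hfin : ({[]} ∪ ⋃ a, List.cons a '' {w | ¬ p (a :: w)}).Finite :=
    (Set.finite_singleton []).union (Set.finite_iUnion fun a => (h a).image (List.cons a))
  refine hfin.subset fun w hw => ?_
  cases w with
  | nil => exact Or.inl rfl
  | cons a w => exact Or.inr (Set.mem_iUnion.2 ⟨a, w, hw, rfl⟩)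

variable {r : Addr → Addr → Prop} {S : Set Addr} {α β γ : Addr}

theorem Coherent.append (hcoh : Coherent r) (h : r α β) (ζ : Addr) : r (α ++ ζ) (β ++ ζ) := by
  induction ζ using List.reverseRecOn with
  | nil => simpa only [List.append_nil] using h
  | append_singleton ζ b ih =>
    simp only [← List.append_assoc]
    cases b
    exacts [(hcoh _ _ ih).1, (hcoh _ _ ih).2]

theorem ChildClosed.append_mem (hcc : ChildClosed S) (hα : α ∈ S) (ζ : Addr) : α ++ ζ ∈ S := by
  induction ζ using List.reverseRecOn with
  | nil => simpa only [List.append_nil] using hα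
  | append_singleton ζ b ih =>
    rw [← List.append_assoc]
    cases b
    exacts [(hcc _ ih).1, (hcc _ ih).2]

theorem Saturated.mem_iff (hsat : Saturated r S) (hr : Equivalence r) (h : r α β) :
    α ∈ S ↔ β ∈ S :=
  ⟨fun hα => hsat α hα β h, fun hβ => hsat β hβ α (hr.symm h)⟩

theorem Saturated.eq_typeOf (hsat : Saturated r S) (hβ : β ∈ S) (h : ∀ δ ∈ S, r β δ) :
    S = typeOf r β :=
  Set.Subset.antisymm h (hsat β hβ)

/-- The reduction of `r`, which for coherent `r` is the smallest reduced relation containing `r`: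
two addresses are related when their extensions by all but finitely many words are `r`-related.
As the alphabet is finite, this is the same as the extensions by all sufficiently long words. -/
def reduction (r : Addr → Addr → Prop) (α β : Addr) : Prop :=
  ∀ᶠ ζ in cofinite, r (α ++ ζ) (β ++ ζ)

theorem Coherent.reduction_of_rel (hcoh : Coherent r) (h : r α β) : reduction r α β :=
  Eventually.of_forall (hcoh.append h)

theorem reduction_iff_children :
    reduction r α β ↔ ∀ b : Bool, reduction r (α ++ [b]) (β ++ [b]) := by
  simp only [reduction, List.append_assoc, List.singleton_append]
  exact eventually_cofinite_list_iff_cons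

theorem coherent_reduction (r : Addr → Addr → Prop) : Coherent (reduction r) := fun _ _ h =>
  ⟨reduction_iff_children.1 h false, reduction_iff_children.1 h true⟩

theorem reduced_reduction (r : Addr → Addr → Prop) : Reduced (reduction r) := fun _ _ h₀ h₁ =>
  reduction_iff_children.2 (Bool.forall_bool.2 ⟨h₀, h₁⟩)

theorem equivalence_reduction (hr : Equivalence r) : Equivalence (reduction r) where
  refl _ := Eventually.of_forall fun _ => hr.refl _
  symm h := h.mono fun _ => hr.symm
  trans h k := h.mp (k.mono fun _ hk hh => hr.trans hh hk)

theorem isTypeSystem_reduction (hr : Equivalence r) : IsTypeSystem (reduction r) :=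
  ⟨equivalence_reduction hr, coherent_reduction r, reduced_reduction r⟩

/-- The relation obtained from `r` by identifying all elements of `S` with each other. It is in
general not reduced, so that a type system arises from it only after taking the `reduction`. -/
def collapse (r : Addr → Addr → Prop) (S : Set Addr) (α β : Addr) : Prop :=
  r α β ∨ (α ∈ S ∧ β ∈ S)

theorem Saturated.mem_iff_of_collapse (hsat : Saturated r S) (hr : Equivalence r)
    (h : collapse r S α β) : α ∈ S ↔ β ∈ S :=
  h.elim (hsat.mem_iff hr) fun ⟨hα, hβ⟩ => iff_of_true hα hβ

theorem Saturated.equivalence_collapse (hsat : Saturated r S) (hr : Equivalence r) :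
    Equivalence (collapse r S) where
  refl α := Or.inl (hr.refl α)
  symm := Or.imp hr.symm And.symm
  trans {α β δ} hαβ hβδ := by
    have hmem_αβ := hsat.mem_iff_of_collapse hr hαβ
    have hmem_βδ := hsat.mem_iff_of_collapse hr hβδ
    by_cases hβ : β ∈ S
    · exact Or.inr ⟨hmem_αβ.2 hβ, hmem_βδ.1 hβ⟩
    · exact Or.inl (hr.trans (hαβ.resolve_right fun h => hβ h.2)
        (hβδ.resolve_right fun h => hβ h.1))

theorem Coherent.collapse (hcoh : Coherent r) (hcc : ChildClosed S) : Coherent (collapse r S) := by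
  rintro α β (h | ⟨hα, hβ⟩)
  · exact ⟨Or.inl (hcoh α β h).1, Or.inl (hcoh α β h).2⟩
  · exact ⟨Or.inr ⟨(hcc α hα).1, (hcc β hβ).1⟩, Or.inr ⟨(hcc α hα).2, (hcc β hβ).2⟩⟩

theorem isQuotientOf_reduction_collapse (hr : Equivalence r) (hcoh : Coherent r)
    (hsat : Saturated r S) (hcc : ChildClosed S) : IsQuotientOf (reduction (collapse r S)) r :=
  ⟨isTypeSystem_reduction (hsat.equivalence_collapse hr),
    fun _ _ h => (hcoh.collapse hcc).reduction_of_rel (Or.inl h)⟩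

theorem rel_append_flatten_replicate (hr : Equivalence r) (hcoh : Coherent r)
    (h : r (α ++ γ) α) (n : ℕ) : r (α ++ (List.replicate n γ).flatten) α := by
  induction n with
  | zero => simpa only [List.replicate_zero, List.flatten_nil, List.append_nil] using hr.refl α
  | succ n ih =>
    rw [List.replicate_succ, List.flatten_cons, ← List.append_assoc]
    exact hr.trans (hcoh.append h _) ih

theorem flatten_replicate_injective {A : Type*} {w : List A} (hw : w ≠ []) :
    Function.Injective fun n => (List.replicate n w).flatten := fun m n h => by
  have hlength : m * w.length = n * w.length := by
    simpa only [List.length_flatten, List.map_replicate, List.sum_replicate, smul_eq_mul]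
      using congrArg List.length h
  exact Nat.eq_of_mul_eq_mul_right (List.length_pos_of_ne_nil hw) hlength

theorem frequently_rel_append_of_cycle (hr : Equivalence r) (hcoh : Coherent r) (hγ : γ ≠ [])
    (h : r (α ++ γ) α) : ∃ᶠ ζ in cofinite, r (α ++ ζ) α :=
  frequently_cofinite_iff_infinite.2 <|
    Set.infinite_of_injective_forall_mem (flatten_replicate_injective hγ)
      (rel_append_flatten_replicate hr hcoh h)

theorem not_reduction_collapse_of_cycle (hr : Equivalence r) (hcoh : Coherent r)
    (hsat : Saturated r S) (hcc : ChildClosed S) (hα : α ∉ S) (hγ : γ ≠ []) (h : r (α ++ γ) α)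
    (hβ : β ∈ S) : ¬ reduction (collapse r S) α β := by
  intro hαβ
  obtain ⟨ζ, hcycle, hcollapse⟩ :=
    ((frequently_rel_append_of_cycle hr hcoh hγ h).and_eventually hαβ).exists
  have hαζ : α ++ ζ ∈ S := (hsat.mem_iff_of_collapse hr hcollapse).2 (hcc.append_mem hβ ζ)
  exact hα ((hsat.mem_iff hr hcycle).1 hαζ)

end

/-- In a simple type system, a nonempty child-closed set of types
whose complement contains a cycle consists of exactly one type. -/
theorem childClosed_with_cycle_in_complement_isSingleType
    (r : Addr → Addr → Prop) (hr : SimpleTS r)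
    (S : Set Addr) (hne : S.Nonempty) (hsat : Saturated r S) (hcc : ChildClosed S)
    (hcyc : ∃ α : Addr, α ∉ S ∧
      ∃ γ : Addr, γ ≠ [] ∧ PathThrough Sᶜ α γ ∧ r (α ++ γ) α) :
    IsSingleType r S := by
  obtain ⟨⟨heq, hcoh, -⟩, -, hsimple⟩ := hr
  obtain ⟨β, hβ⟩ := hne
  obtain ⟨α, hα, γ, hγ, -, hcycle⟩ := hcyc
  rcases hsimple _ (isQuotientOf_reduction_collapse heq hcoh hsat hcc) with htrivial | huniversal
  · refine ⟨β, hsat.eq_typeOf hβ fun δ hδ => (htrivial β δ).1 ?_⟩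
    exact (hcoh.collapse hcc).reduction_of_rel (Or.inr ⟨hβ, hδ⟩)
  · exact absurd (huniversal α β)
      (not_reduction_collapse_of_cycle heq hcoh hsat hcc hα hγ hcycle hβ)
end
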